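/- arXiv:1106.1840 — 2 statements merged into one kernel-verified Lean document; each statement's English description precedes it below -/
import Mathlib

section
/- Let n ≥ 3 and let x = {d, d̄} ∈ M_n be a pair of centrally symmetric non-diameter diagonals, where d = {a, a+m} with 2 ≤ m ≤ n−1. Then there exists a bijection from the set L(x) = {y ∈ M_n : y ≠ x and y is compatible with x} to the disjoint union of the element set of the type A_{m−2} model and the element set of the type D_{n−m+1} model (where the A_0 model is the empty set) such that: two elements of L(x) mapped into the A-part are compatible iff their images are compatible in the A_{m−2} model; two elements mapped into the D-part are compatible iff their images are compatible in the D_{n−m+1} model; and any element mapped into the A-part is compatible with any element mapped into the D-part. (The link of a symmetric pair is the join of a type A model and a smaller type D model.) -/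
open Pointwise

namespace GalD

/-- A polytope in `ℝ^d`: the convex hull of a finite set of points. -/
def IsPolytope {d : ℕ} (P : Set (Fin d → ℝ)) : Prop :=
  ∃ V : Finset (Fin d → ℝ), P = convexHull ℝ (V : Set (Fin d → ℝ))

/-- A face of `P`: a nonempty exposed face of `P` (`P` itself included). -/
def IsFaceOf {d : ℕ} (F P : Set (Fin d → ℝ)) : Prop :=
  F.Nonempty ∧ IsExposed ℝ P F

/-- The dimension of a set: the rank of the direction of its affine span. -/
noncomputable def polyDim {d : ℕ} (P : Set (Fin d → ℝ)) : ℕ :=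
  Module.finrank ℝ (affineSpan ℝ P).direction

/-- A facet: a face of dimension `dim P - 1`. -/
def IsFacetOf {d : ℕ} (F P : Set (Fin d → ℝ)) : Prop :=
  IsFaceOf F P ∧ polyDim F + 1 = polyDim P

/-- A vertex: a point spanning a face of dimension 0. -/
def IsVertexOf {d : ℕ} (v : Fin d → ℝ) (P : Set (Fin d → ℝ)) : Prop :=
  IsFaceOf {v} P

/-- A simple polytope: every vertex is contained in exactly `dim P` facets. -/
def IsSimplePolytope {d : ℕ} (P : Set (Fin d → ℝ)) : Prop :=
  IsPolytope P ∧ ∀ v, IsVertexOf v P →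
    {F : Set (Fin d → ℝ) | IsFacetOf F P ∧ v ∈ F}.ncard = polyDim P

/-- A flag polytope: simple, and every collection of pairwise intersecting facets
has a nonempty common intersection. -/
def IsFlagPolytope {d : ℕ} (P : Set (Fin d → ℝ)) : Prop :=
  IsSimplePolytope P ∧
  ∀ 𝒮 : Set (Set (Fin d → ℝ)), 𝒮.Nonempty → (∀ F ∈ 𝒮, IsFacetOf F P) →
    (∀ F ∈ 𝒮, ∀ G ∈ 𝒮, (F ∩ G).Nonempty) → (⋂₀ 𝒮).Nonempty

/-- Combinatorial equivalence: an order isomorphism between the face posets. -/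
def CombEquiv {d₁ d₂ : ℕ} (P : Set (Fin d₁ → ℝ)) (Q : Set (Fin d₂ → ℝ)) : Prop :=
  Nonempty ({F : Set (Fin d₁ → ℝ) // IsFaceOf F P} ≃o
            {G : Set (Fin d₂ → ℝ) // IsFaceOf G Q})

/-- The product of a set in `ℝ^{d₁}` and a set in `ℝ^{d₂}`, inside `ℝ^{d₁+d₂}`. -/
def polyProd {d₁ d₂ : ℕ} (Q : Set (Fin d₁ → ℝ)) (R : Set (Fin d₂ → ℝ)) :
    Set (Fin (d₁ + d₂) → ℝ) :=
  {x | (fun i => x (Fin.castAdd d₂ i)) ∈ Q ∧ (fun j => x (Fin.natAdd d₁ j)) ∈ R}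

/-- `P` is not combinatorially equivalent to a nontrivial product of two polytopes. -/
def Indecomposable {d : ℕ} (P : Set (Fin d → ℝ)) : Prop :=
  ¬ ∃ (d₁ d₂ : ℕ) (Q : Set (Fin d₁ → ℝ)) (R : Set (Fin d₂ → ℝ)),
    IsPolytope Q ∧ IsPolytope R ∧ 1 ≤ polyDim Q ∧ 1 ≤ polyDim R ∧
    CombEquiv P (polyProd Q R)

/-- A building set on the ground set `V`. -/
structure IsBuildingSetOn {m : ℕ} (V : Finset (Fin m)) (B : Finset (Finset (Fin m))) :
    Prop where
  subset_ground : ∀ S ∈ B, S ⊆ V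
  nonempty_mem : ∀ S ∈ B, S.Nonempty
  singleton_mem : ∀ i ∈ V, ({i} : Finset (Fin m)) ∈ B
  ground_mem : V ∈ B
  union_mem : ∀ S₁ ∈ B, ∀ S₂ ∈ B, (S₁ ∩ S₂).Nonempty → S₁ ∪ S₂ ∈ B

/-- A connected building set on `[m]`. -/
def IsConnectedBuildingSet (m : ℕ) (B : Finset (Finset (Fin m))) : Prop :=
  IsBuildingSetOn (Finset.univ : Finset (Fin m)) B

/-- The nestohedron `P_B`: the Minkowski sum of the simplices `Δ_S`, `S ∈ B`. -/
noncomputable def nestohedron (m : ℕ) (B : Finset (Finset (Fin m))) :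
    Set (Fin m → ℝ) :=
  ∑ S ∈ B, convexHull ℝ ((fun i => (Pi.single i 1 : Fin m → ℝ)) '' (S : Set (Fin m)))

/-- A diagonal of a convex `N`-gon with vertices labelled by `ZMod N`. -/
def IsDiag (N : ℕ) (e : Finset (ZMod N)) : Prop :=
  ∃ a b : ZMod N, e = {a, b} ∧ b ≠ a ∧ b ≠ a + 1 ∧ b ≠ a - 1

/-- `c` lies strictly between `a` and `b` on the arc from `a` to `b` (counterclockwise). -/
def StrictBtw (N : ℕ) (a c b : ZMod N) : Prop :=
  0 < (c - a).val ∧ (c - a).val < (b - a).val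

/-- Two diagonals cross: their endpoints alternate around the circle. -/
def Crosses (N : ℕ) (e f : Finset (ZMod N)) : Prop :=
  ∃ a b c d : ZMod N, e = {a, b} ∧ f = {c, d} ∧
    StrictBtw N a c b ∧ StrictBtw N b d a

/-- Image of a diagonal under the central symmetry `a ↦ a + n` of the `2n`-gon. -/
def centralSym (n : ℕ) (e : Finset (ZMod (2 * n))) : Finset (ZMod (2 * n)) :=
  e.image (· + (n : ZMod (2 * n)))

/-- A diameter of the `2n`-gon: a diagonal `{a, a + n}`. -/
def IsDiameter (n : ℕ) (e : Finset (ZMod (2 * n))) : Prop :=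
  ∃ a : ZMod (2 * n), e = {a, a + (n : ZMod (2 * n))}

/-- Raw elements of the type `D_n` model: symmetric pairs of diagonals,
red diameters and blue diameters. -/
inductive DElem (n : ℕ) where
  | pair : Finset (Finset (ZMod (2 * n))) → DElem n
  | red  : Finset (ZMod (2 * n)) → DElem n
  | blue : Finset (ZMod (2 * n)) → DElem n

/-- Membership in the set `M_n` of the type `D_n` model. -/
def memM (n : ℕ) : DElem n → Prop
  | .pair s => ∃ e, IsDiag (2 * n) e ∧ ¬ IsDiameter n e ∧ s = {e, centralSym n e}
  | .red e => IsDiag (2 * n) e ∧ IsDiameter n e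
  | .blue e => IsDiag (2 * n) e ∧ IsDiameter n e

/-- Compatibility of elements of the type `D_n` model. -/
def DCompat (n : ℕ) : DElem n → DElem n → Prop
  | .pair s, .pair t => ∀ e ∈ s, ∀ f ∈ t, ¬ Crosses (2 * n) e f
  | .pair s, .red e => ∀ f ∈ s, ¬ Crosses (2 * n) e f
  | .pair s, .blue e => ∀ f ∈ s, ¬ Crosses (2 * n) e f
  | .red e, .pair s => ∀ f ∈ s, ¬ Crosses (2 * n) e f
  | .blue e, .pair s => ∀ f ∈ s, ¬ Crosses (2 * n) e f
  | .red _, .red _ => True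
  | .blue _, .blue _ => True
  | .red e, .blue f => e = f
  | .blue e, .red f => e = f

/-- The set `M_n` of the type `D_n` model, as a type. -/
def MSet (n : ℕ) := {x : DElem n // memM n x}

/-- `P` realizes the type `D_n` model via the bijection `φ`. -/
def RealizesDWith (n : ℕ) {d : ℕ} (P : Set (Fin d → ℝ))
    (φ : MSet n → Set (Fin d → ℝ)) : Prop :=
  IsPolytope P ∧ IsFlagPolytope P ∧ polyDim P = n ∧
  (∀ x, IsFacetOf (φ x) P) ∧ Function.Injective φ ∧
  (∀ F, IsFacetOf F P → ∃ x, φ x = F) ∧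
  ∀ x y : MSet n, x ≠ y → ((φ x ∩ φ y).Nonempty ↔ DCompat n x.1 y.1)

/-- `P` realizes the type `D_n` model. -/
def RealizesD (n : ℕ) {d : ℕ} (P : Set (Fin d → ℝ)) : Prop :=
  ∃ φ, RealizesDWith n P φ

/-- Elements of the type `A_k` model: diagonals of a convex `(k+3)`-gon. -/
def ASet (k : ℕ) := {e : Finset (ZMod (k + 3)) // IsDiag (k + 3) e}

/-- `P` realizes the type `A_k` model via the bijection `φ`. -/
def RealizesAWith (k : ℕ) {d : ℕ} (P : Set (Fin d → ℝ))
    (φ : ASet k → Set (Fin d → ℝ)) : Prop :=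
  IsPolytope P ∧ IsFlagPolytope P ∧ polyDim P = k ∧
  (∀ x, IsFacetOf (φ x) P) ∧ Function.Injective φ ∧
  (∀ F, IsFacetOf F P → ∃ x, φ x = F) ∧
  ∀ x y : ASet k, x ≠ y → ((φ x ∩ φ y).Nonempty ↔ ¬ Crosses (k + 3) x.1 y.1)

/-- `P` realizes the type `A_k` model. -/
def RealizesA (k : ℕ) {d : ℕ} (P : Set (Fin d → ℝ)) : Prop :=
  ∃ φ, RealizesAWith k P φ

/-- A closed halfspace in `ℝ^d`. -/
def IsClosedHalfspace {d : ℕ} (H : Set (Fin d → ℝ)) : Prop :=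
  ∃ (l : (Fin d → ℝ) →ₗ[ℝ] ℝ) (c : ℝ), l ≠ 0 ∧ H = {x | l x ≤ c}

/-- `P'` is obtained from `P` by shaving off a face of codimension 2. -/
def ObtainedByShaving {d : ℕ} (P P' : Set (Fin d → ℝ)) : Prop :=
  ∃ G H : Set (Fin d → ℝ), IsFaceOf G P ∧ polyDim G + 2 = polyDim P ∧
    IsClosedHalfspace H ∧ G ∩ H = ∅ ∧
    (∀ v, IsVertexOf v P → v ∉ G → v ∈ interior H) ∧ P' = P ∩ H

/-- The restriction `B|_S` of a building set. -/
def restrictBS {m : ℕ} (B : Finset (Finset (Fin m))) (S : Finset (Fin m)) :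
    Finset (Finset (Fin m)) :=
  B.filter (· ⊆ S)

/-- The contraction `B / S` of a building set. -/
def contractBS {m : ℕ} (B : Finset (Finset (Fin m))) (S : Finset (Fin m)) :
    Finset (Finset (Fin m)) :=
  (B.filter (fun S'' => ¬ S'' ⊆ S)).image (fun S'' => S'' \ S)

/-- The subset of the nestohedron `P_B` on which `x ↦ ∑_{i ∈ S} x i` is minimized. -/
def minFace (m : ℕ) (B : Finset (Finset (Fin m))) (S : Finset (Fin m)) :
    Set (Fin m → ℝ) :=
  {x ∈ nestohedron m B | ∀ y ∈ nestohedron m B, ∑ i ∈ S, x i ≤ ∑ i ∈ S, y i}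

/-!
Cutting the `2n`-gon along `d = {a, a + m}` and its opposite leaves an `(m + 1)`-gon, its opposite,
and a centrally symmetric `2(n - m + 1)`-gon between them. The inclusion of each of these polygons
preserves the circular order of the vertices, hence crossings, and also diagonals, since these are
exactly the pairs of vertices that cross something. The inclusion of the central polygon moreover
commutes with the central symmetry, so it embeds one type `D` model into the other. Finally, a
diagonal that crosses neither `d` nor its opposite lies in one of the three polygons.
-/

/-! ### The circular order on the vertices of a polygon -/

/-- A map of circularly ordered types identifying the source with a subset of the target, such as
the inclusion of the vertices of a polygon inscribed in a larger one. -/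
structure IsCyclicEmbedding {α β : Type*} [SBtw α] [SBtw β] (φ : α → β) : Prop where
  injective : Function.Injective φ
  sbtw_iff : ∀ a b c, sbtw (φ a) (φ b) (φ c) ↔ sbtw a b c

lemma sbtw_iff_val {N : ℕ} [NeZero N] (a b c : ZMod N) :
    sbtw a b c ↔ a.val < b.val ∧ b.val < c.val ∨ b.val < c.val ∧ c.val < a.val ∨
      c.val < a.val ∧ a.val < b.val := by
  cases N with
  | zero => exact absurd rfl (NeZero.ne 0)
  | succ N => exact Fin.sbtw_iff

lemma val_sub_eq_ite {N : ℕ} [NeZero N] (x y : ZMod N) :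
    (x - y).val = if y.val ≤ x.val then x.val - y.val else N + x.val - y.val := by
  have hy := y.val_lt
  split_ifs with h
  · exact ZMod.val_sub h
  · have hsum := ZMod.val_add (x - y) y
    have hlt := (x - y).val_lt
    rw [sub_add_cancel] at hsum
    rcases lt_or_ge ((x - y).val + y.val) N with hN | hN
    · rw [Nat.mod_eq_of_lt hN] at hsum
      omega
    · rw [Nat.mod_eq_sub_mod hN, Nat.mod_eq_of_lt (by omega)] at hsum
      omega

lemma strictBtw_iff_sbtw {N : ℕ} [NeZero N] {a b c : ZMod N} :
    StrictBtw N a b c ↔ sbtw a b c := by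
  have ha := a.val_lt
  have hb := b.val_lt
  have hc := c.val_lt
  rw [StrictBtw, sbtw_iff_val, val_sub_eq_ite, val_sub_eq_ite]
  split_ifs <;> omega

lemma sbtw_sub_right_iff {N : ℕ} [NeZero N] (p a b c : ZMod N) :
    sbtw (a - p) (b - p) (c - p) ↔ sbtw a b c := by
  simp only [← strictBtw_iff_sbtw, StrictBtw, sub_sub_sub_cancel_right]

lemma isCyclicEmbedding_add_right {N : ℕ} [NeZero N] (t : ZMod N) :
    IsCyclicEmbedding (· + t) where
  injective := add_left_injective t
  sbtw_iff a b c := by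
    rw [← sbtw_sub_right_iff t]
    simp only [add_sub_cancel_right]

lemma IsCyclicEmbedding.mem_cIcc_iff {α β : Type*} [CircularOrder α] [CircularOrder β]
    {φ : α → β} (hφ : IsCyclicEmbedding φ) (u v x : α) :
    φ x ∈ Set.cIcc (φ u) (φ v) ↔ x ∈ Set.cIcc u v := by
  rw [Set.mem_cIcc, Set.mem_cIcc, btw_iff_not_sbtw, btw_iff_not_sbtw, hφ.sbtw_iff]

lemma val_add_natCast_sub {N : ℕ} (p : ZMod N) {t : ℕ} (ht : t < N) :
    (p + (t : ZMod N) - p).val = t := by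
  rw [add_sub_cancel_left, ZMod.val_natCast_of_lt ht]

lemma mem_cIcc_add_natCast_iff {N : ℕ} [NeZero N] (p x : ZMod N) {t : ℕ} (ht : 0 < t)
    (htN : t < N) : x ∈ Set.cIcc p (p + (t : ZMod N)) ↔ (x - p).val ≤ t := by
  rw [Set.mem_cIcc, btw_iff_not_sbtw, ← sbtw_sub_right_iff p, sbtw_iff_val, sub_self,
    ZMod.val_zero, val_add_natCast_sub p htN]
  omega

/-- The map of a polygon with `M` vertices into one with `N` vertices that sends the vertex `t < M`
to the vertex `g t` steps after `p`. -/
def polygonMap {M N : ℕ} (p : ZMod N) (g : ℕ → ℕ) (i : ZMod M) : ZMod N :=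
  p + (g i.val : ZMod N)

section polygonMap

variable {M N : ℕ}

lemma polygonMap_natCast (p : ZMod N) (g : ℕ → ℕ) {t : ℕ} (ht : t < M) :
    polygonMap p g (t : ZMod M) = p + (g t : ZMod N) := by
  rw [polygonMap, ZMod.val_natCast_of_lt ht]

variable [NeZero M] {g : ℕ → ℕ}

lemma val_polygonMap_sub (hN : ∀ t < M, g t < N) (p : ZMod N) (i : ZMod M) :
    (polygonMap p g i - p).val = g i.val :=
  val_add_natCast_sub p (hN _ i.val_lt)

lemma isCyclicEmbedding_polygonMap [NeZero N] (hg : StrictMonoOn g (Set.Iio M))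
    (hN : ∀ t < M, g t < N) (p : ZMod N) :
    IsCyclicEmbedding (polygonMap p g : ZMod M → ZMod N) where
  injective i j h := by
    apply ZMod.val_injective
    apply hg.injOn i.val_lt j.val_lt
    rw [← val_polygonMap_sub hN p, h, val_polygonMap_sub hN p]
  sbtw_iff a b c := by
    rw [← sbtw_sub_right_iff p]
    simp only [sbtw_iff_val, val_polygonMap_sub hN, hg.lt_iff_lt, Set.mem_Iio, ZMod.val_lt]

lemma mem_range_polygonMap_iff [NeZero N] (hN : ∀ t < M, g t < N) (p x : ZMod N) :
    x ∈ Set.range (polygonMap p g : ZMod M → ZMod N) ↔ ∃ t < M, g t = (x - p).val := by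
  constructor
  · rintro ⟨i, rfl⟩
    exact ⟨i.val, i.val_lt, (val_polygonMap_sub hN p i).symm⟩
  · rintro ⟨t, ht, hgt⟩
    refine ⟨t, ?_⟩
    rw [polygonMap_natCast p g ht, hgt, ZMod.natCast_zmod_val, add_sub_cancel]

end polygonMap

/-! ### Diagonals and crossings -/

lemma pair_eq_pair_iff {α : Type*} [DecidableEq α] {a b c d : α} :
    ({a, b} : Finset α) = {c, d} ↔ a = c ∧ b = d ∨ a = d ∧ b = c := by
  rw [← Finset.coe_inj, Finset.coe_pair, Finset.coe_pair, Set.pair_eq_pair_iff]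

section crossing

variable {M N : ℕ}

lemma not_isDiag_side (a : ZMod N) : ¬ IsDiag N {a, a + 1} := by
  rintro ⟨u, v, huv, -, hsucc, hpred⟩
  rcases pair_eq_pair_iff.1 huv with ⟨rfl, rfl⟩ | ⟨rfl, rfl⟩
  · exact hsucc rfl
  · exact hpred (add_sub_cancel_right a 1).symm

/-- `S` is to be thought of as the set of sides of the polygon `φ` that are diagonals of the
ambient polygon. -/
lemma exists_isDiag_image_eq {φ : ZMod M → ZMod N} {S : Set (Finset (ZMod N))}
    (hside : ∀ i, φ (i + 1) = φ i + 1 ∨ {φ i, φ (i + 1)} ∈ S) {e : Finset (ZMod N)}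
    (he : IsDiag N e) (heS : e ∉ S) (hrange : (e : Set (ZMod N)) ⊆ Set.range φ) :
    ∃ e', IsDiag M e' ∧ e'.image φ = e := by
  have not_side : ∀ i, e ≠ {φ i, φ (i + 1)} := by
    rintro i rfl
    exact (hside i).elim (fun h => not_isDiag_side (φ i) (h ▸ he)) heS
  obtain ⟨u, v, rfl, hvu, -⟩ := id he
  rw [Finset.coe_pair, Set.pair_subset_iff] at hrange
  obtain ⟨⟨i, rfl⟩, ⟨j, rfl⟩⟩ := hrange
  refine ⟨{i, j}, ⟨i, j, rfl, ?_, ?_, ?_⟩, by rw [Finset.image_insert, Finset.image_singleton]⟩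
  · rintro rfl
    exact hvu rfl
  · rintro rfl
    exact not_side i rfl
  · rintro rfl
    exact not_side (i - 1) (by rw [sub_add_cancel, Finset.pair_comm])

variable [NeZero M] [NeZero N]

lemma crosses_pair_iff {u v w z : ZMod N} :
    Crosses N {u, v} {w, z} ↔
      sbtw u w v ∧ sbtw v z u ∨ sbtw u z v ∧ sbtw v w u := by
  simp only [Crosses, strictBtw_iff_sbtw]
  constructor
  · rintro ⟨a, b, c, d, hab, hcd, hacb, hbda⟩
    rw [pair_eq_pair_iff] at hab hcd
    rcases hab with ⟨rfl, rfl⟩ | ⟨rfl, rfl⟩ <;> rcases hcd with ⟨rfl, rfl⟩ | ⟨rfl, rfl⟩ <;> tauto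
  · rintro (⟨hw, hz⟩ | ⟨hz, hw⟩)
    · exact ⟨u, v, w, z, rfl, rfl, hw, hz⟩
    · exact ⟨u, v, z, w, rfl, Finset.pair_comm w z, hz, hw⟩

lemma Crosses.symm {e f : Finset (ZMod N)} (h : Crosses N e f) : Crosses N f e := by
  obtain ⟨a, b, c, d, rfl, rfl, hacb, hbda⟩ := h
  rw [strictBtw_iff_sbtw] at hacb hbda
  exact crosses_pair_iff.2 (.inr ⟨(hbda.cyclic_left.trans_left hacb).cyclic_left,
    (hacb.cyclic_left.trans_left hbda).cyclic_left⟩)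

lemma crosses_comm {e f : Finset (ZMod N)} : Crosses N e f ↔ Crosses N f e :=
  ⟨Crosses.symm, Crosses.symm⟩

lemma not_crosses_of_subset_cIcc {u v : ZMod N} (huv : u ≠ v) {e f : Finset (ZMod N)}
    (he : (e : Set (ZMod N)) ⊆ Set.cIcc u v) (hf : (f : Set (ZMod N)) ⊆ Set.cIcc v u) :
    ¬ Crosses N e f := by
  rintro ⟨a, b, c, d, rfl, rfl, hacb, hbda⟩
  rw [strictBtw_iff_sbtw] at hacb hbda
  rw [Finset.coe_pair, Set.pair_subset_iff] at he hf
  simp only [Set.mem_cIcc, btw_iff_not_sbtw, sbtw_iff_val] at he hf hacb hbda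
  have huv_val := (ZMod.val_injective N).ne huv
  omega

lemma subset_cIcc_or_of_not_crosses {u v w z : ZMod N} (h : ¬ Crosses N {u, v} {w, z}) :
    (({w, z} : Finset (ZMod N)) : Set (ZMod N)) ⊆ Set.cIcc u v ∨
      (({w, z} : Finset (ZMod N)) : Set (ZMod N)) ⊆ Set.cIcc v u := by
  simp only [Finset.coe_pair, Set.pair_subset_iff, Set.mem_cIcc, btw_iff_not_sbtw]
  rw [crosses_pair_iff] at h
  have hw : sbtw u w v → ¬ sbtw v w u := SBtw.sbtw.not_sbtw
  have hz : sbtw u z v → ¬ sbtw v z u := SBtw.sbtw.not_sbtw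
  tauto

lemma exists_sbtw_iff {a b : ZMod N} : (∃ c, sbtw a c b) ↔ b ≠ a ∧ b ≠ a + 1 := by
  simp only [← strictBtw_iff_sbtw, StrictBtw]
  constructor
  · rintro ⟨c, hac, hcb⟩
    constructor
    · rintro rfl
      rw [sub_self, ZMod.val_zero] at hcb
      omega
    · rintro rfl
      have one_mod_le := Nat.mod_le 1 N
      rw [add_sub_cancel_left, ZMod.val_one_eq_one_mod] at hcb
      omega
  · rintro ⟨hne, hne_succ⟩
    have hN : N ≠ 1 := by
      rintro rfl
      exact hne (Subsingleton.elim b a)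
    have hone : (1 : ZMod N).val = 1 := ZMod.val_one'' hN
    refine ⟨a + 1, ?_, ?_⟩
    · rw [add_sub_cancel_left, hone]
      exact one_pos
    · rw [add_sub_cancel_left, hone]
      have h0 : (b - a).val ≠ 0 := (ZMod.val_ne_zero _).2 (sub_ne_zero.2 hne)
      have h1 : (b - a).val ≠ 1 := fun h =>
        hne_succ (sub_eq_iff_eq_add'.1 (ZMod.val_injective N (h.trans hone.symm)))
      omega

lemma isDiag_iff_exists_crosses {e : Finset (ZMod N)} :
    IsDiag N e ↔ ∃ f, Crosses N e f := by
  have key : ∀ a b : ZMod N,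
      (b ≠ a ∧ b ≠ a + 1 ∧ b ≠ a - 1) ↔ (∃ c, sbtw a c b) ∧ ∃ d, sbtw b d a := by
    intro a b
    rw [exists_sbtw_iff, exists_sbtw_iff, ne_comm (a := a), Ne, Ne, Ne, Ne, eq_sub_iff_add_eq,
      eq_comm (a := a)]
    tauto
  simp only [IsDiag, Crosses, key, strictBtw_iff_sbtw]
  constructor
  · rintro ⟨a, b, rfl, ⟨c, hc⟩, ⟨d, hd⟩⟩
    exact ⟨{c, d}, a, b, c, d, rfl, rfl, hc, hd⟩
  · rintro ⟨f, a, b, c, d, he, -, hc, hd⟩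
    exact ⟨a, b, he, ⟨c, hc⟩, ⟨d, hd⟩⟩

namespace IsCyclicEmbedding

variable {φ : ZMod M → ZMod N}

lemma crosses_image_iff (hφ : IsCyclicEmbedding φ) (e f : Finset (ZMod M)) :
    Crosses N (e.image φ) (f.image φ) ↔ Crosses M e f := by
  have pair_of_image_eq : ∀ (e : Finset (ZMod M)) (a b : ZMod N), e.image φ = {a, b} →
      ∃ i j, φ i = a ∧ φ j = b ∧ e = {i, j} := by
    intro e a b h
    obtain ⟨i, -, rfl⟩ := Finset.mem_image.1 (h ▸ Finset.mem_insert_self a {b})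
    obtain ⟨j, -, rfl⟩ := Finset.mem_image.1
      (h ▸ Finset.mem_insert_of_mem (Finset.mem_singleton_self b))
    refine ⟨i, j, rfl, rfl, Finset.image_injective hφ.injective ?_⟩
    rw [h, Finset.image_insert, Finset.image_singleton]
  simp only [Crosses, strictBtw_iff_sbtw]
  constructor
  · rintro ⟨a, b, c, d, he, hf, hacb, hbda⟩
    obtain ⟨i, j, rfl, rfl, rfl⟩ := pair_of_image_eq e a b he
    obtain ⟨k, l, rfl, rfl, rfl⟩ := pair_of_image_eq f c d hf
    exact ⟨i, j, k, l, rfl, rfl, (hφ.sbtw_iff i k j).1 hacb, (hφ.sbtw_iff j l i).1 hbda⟩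
  · rintro ⟨i, j, k, l, rfl, rfl, hikj, hjli⟩
    exact ⟨φ i, φ j, φ k, φ l, by rw [Finset.image_insert, Finset.image_singleton],
      by rw [Finset.image_insert, Finset.image_singleton],
      (hφ.sbtw_iff i k j).2 hikj, (hφ.sbtw_iff j l i).2 hjli⟩

lemma isDiag_image (hφ : IsCyclicEmbedding φ) {e : Finset (ZMod M)} (he : IsDiag M e) :
    IsDiag N (e.image φ) := by
  obtain ⟨f, hf⟩ := isDiag_iff_exists_crosses.1 he
  exact isDiag_iff_exists_crosses.2 ⟨f.image φ, (hφ.crosses_image_iff e f).2 hf⟩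

lemma not_image_subset_cIcc (hφ : IsCyclicEmbedding φ) {u v : ZMod N} (huv : u ≠ v)
    (hrange : Set.range φ ⊆ Set.cIcc u v) {e : Finset (ZMod M)} (he : IsDiag M e) :
    ¬ (e.image φ : Set (ZMod N)) ⊆ Set.cIcc v u := by
  obtain ⟨f, hf⟩ := isDiag_iff_exists_crosses.1 he
  intro hsub
  refine not_crosses_of_subset_cIcc huv.symm hsub ?_ ((hφ.crosses_image_iff e f).2 hf)
  rw [Finset.coe_image]
  exact (Set.image_subset_range φ _).trans hrange

end IsCyclicEmbedding

end crossing

/-! ### The central symmetry and the elements of the type `D` model -/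

section centralSym

lemma exists_natCast_eq_or_add_natCast_eq {k : ℕ} [NeZero k] (j : ZMod (2 * k)) :
    ∃ t < k, (t : ZMod (2 * k)) = j ∨ (t + k : ZMod (2 * k)) = j := by
  have hj := j.val_lt
  rcases lt_or_ge j.val k with hlt | hge
  · exact ⟨j.val, hlt, .inl (ZMod.natCast_zmod_val j)⟩
  · refine ⟨j.val - k, by omega, .inr ?_⟩
    rw [← Nat.cast_add, Nat.sub_add_cancel hge, ZMod.natCast_zmod_val]

variable {n : ℕ} (e f : Finset (ZMod (2 * n)))

lemma add_natCast_add_natCast (x : ZMod (2 * n)) : x + n + n = x := by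
  have h : ((2 * n : ℕ) : ZMod (2 * n)) = 0 := ZMod.natCast_self _
  rw [add_assoc, ← Nat.cast_add, ← two_mul, h, add_zero]

lemma centralSym_pair (u v : ZMod (2 * n)) :
    centralSym n {u, v} = {u + (n : ZMod (2 * n)), v + (n : ZMod (2 * n))} := by
  rw [centralSym, Finset.image_insert, Finset.image_singleton]

lemma centralSym_centralSym : centralSym n (centralSym n e) = e := by
  simp only [centralSym, Finset.image_image, Function.comp_def, add_natCast_add_natCast,
    Finset.image_id']

variable {e} in
lemma IsDiameter.centralSym_eq (he : IsDiameter n e) : centralSym n e = e := by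
  obtain ⟨u, rfl⟩ := he
  rw [centralSym_pair, add_natCast_add_natCast, Finset.pair_comm]

section

variable [NeZero n]

lemma crosses_centralSym_iff :
    Crosses (2 * n) (centralSym n e) (centralSym n f) ↔ Crosses (2 * n) e f :=
  (isCyclicEmbedding_add_right _).crosses_image_iff e f

variable {e} in
lemma IsDiag.centralSym (he : IsDiag (2 * n) e) : IsDiag (2 * n) (centralSym n e) :=
  (isCyclicEmbedding_add_right _).isDiag_image he

lemma centralSym_subset_cIcc_iff (u v : ZMod (2 * n)) :
    (centralSym n e : Set (ZMod (2 * n))) ⊆ Set.cIcc (u + n) (v + n) ↔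
      (e : Set (ZMod (2 * n))) ⊆ Set.cIcc u v := by
  rw [centralSym, Finset.coe_image, Set.image_subset_iff]
  exact forall₂_congr fun x _ => (isCyclicEmbedding_add_right _).mem_cIcc_iff u v x

end

/-- The pair `{e, ē}` as a raw element of the type `D_n` model. -/
def symPair (n : ℕ) (e : Finset (ZMod (2 * n))) : DElem n :=
  .pair {e, centralSym n e}

lemma symPair_centralSym : symPair n (centralSym n e) = symPair n e := by
  rw [symPair, symPair, centralSym_centralSym, Finset.pair_comm]

variable {e f} in
lemma eq_or_eq_centralSym_of_symPair_eq (h : symPair n e = symPair n f) :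
    e = f ∨ e = centralSym n f :=
  (pair_eq_pair_iff.1 (DElem.pair.inj h)).imp And.left And.left

lemma dCompat_symPair_iff [NeZero n] :
    DCompat n (symPair n e) (symPair n f) ↔
      ¬ Crosses (2 * n) e f ∧ ¬ Crosses (2 * n) e (centralSym n f) := by
  have hsymm : Crosses (2 * n) (centralSym n e) f ↔ Crosses (2 * n) e (centralSym n f) := by
    rw [← crosses_centralSym_iff, centralSym_centralSym]
  simp only [symPair, DCompat, Finset.mem_insert, Finset.mem_singleton, forall_eq_or_imp,
    forall_eq, hsymm, crosses_centralSym_iff]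
  tauto

end centralSym

namespace DElem

/-- The diagonals underlying an element of the type `D_n` model: two for a pair, one for a coloured
diameter. -/
def diagonals {n : ℕ} : DElem n → Finset (Finset (ZMod (2 * n)))
  | .pair s => s
  | .red e => {e}
  | .blue e => {e}

/-- The map of type `D` models induced by a map of polygons. -/
def map {k n : ℕ} (φ : ZMod (2 * k) → ZMod (2 * n)) : DElem k → DElem n
  | .pair s => .pair (s.image (Finset.image φ))
  | .red e => .red (e.image φ)
  | .blue e => .blue (e.image φ)

variable {k n : ℕ} {φ : ZMod (2 * k) → ZMod (2 * n)}

lemma diagonals_map (z : DElem k) :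
    (z.map φ).diagonals = z.diagonals.image (Finset.image φ) := by
  cases z <;> simp only [map, diagonals, Finset.image_singleton]

lemma subset_range_of_mem_diagonals_map {z : DElem k} {e : Finset (ZMod (2 * n))}
    (he : e ∈ (z.map φ).diagonals) : (e : Set (ZMod (2 * n))) ⊆ Set.range φ := by
  rw [diagonals_map] at he
  obtain ⟨f, -, rfl⟩ := Finset.mem_image.1 he
  rw [Finset.coe_image]
  exact Set.image_subset_range φ _

lemma map_injective (hφ : Function.Injective φ) : Function.Injective (map φ) := by
  have himage := Finset.image_injective hφ
  intro z w h
  cases z <;> cases w <;>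
    simp_all only [map, pair.injEq, red.injEq, blue.injEq, reduceCtorEq, himage.eq_iff,
      (Finset.image_injective himage).eq_iff]

end DElem

lemma isDiag_of_mem_diagonals {n : ℕ} [NeZero n] {y : DElem n} (hy : memM n y)
    {e : Finset (ZMod (2 * n))} (he : e ∈ y.diagonals) : IsDiag (2 * n) e := by
  cases y with
  | pair s =>
    obtain ⟨f, hf, -, rfl⟩ := hy
    rcases Finset.mem_insert.1 he with rfl | he
    · exact hf
    · exact Finset.mem_singleton.1 he ▸ hf.centralSym
  | red f => exact Finset.mem_singleton.1 he ▸ hy.1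
  | blue f => exact Finset.mem_singleton.1 he ▸ hy.1

lemma dCompat_pair_iff {n : ℕ} [NeZero n] {s : Finset (Finset (ZMod (2 * n)))} {y : DElem n} :
    DCompat n (.pair s) y ↔ ∀ e ∈ s, ∀ f ∈ y.diagonals, ¬ Crosses (2 * n) e f := by
  cases y with
  | pair t => rfl
  | red f | blue f =>
    simp only [DCompat, DElem.diagonals, Finset.mem_singleton, forall_eq, crosses_comm (e := f)]

namespace IsCyclicEmbedding

variable {k n : ℕ} {φ : ZMod (2 * k) → ZMod (2 * n)}

lemma dCompat_map_iff [NeZero k] [NeZero n] (hφ : IsCyclicEmbedding φ) (z w : DElem k) :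
    DCompat n (z.map φ) (w.map φ) ↔ DCompat k z w := by
  have himage := Finset.image_injective hφ.injective
  cases z <;> cases w <;>
    simp only [DElem.map, DCompat, Finset.forall_mem_image, hφ.crosses_image_iff, himage.eq_iff]

end IsCyclicEmbedding

section equivariant

variable {k n : ℕ} {φ : ZMod (2 * k) → ZMod (2 * n)} (hsymm : ∀ j, φ (j + k) = φ j + n)
include hsymm

lemma image_centralSym (e : Finset (ZMod (2 * k))) :
    (centralSym k e).image φ = centralSym n (e.image φ) := by
  simp only [centralSym, Finset.image_image, Function.comp_def, hsymm]

lemma map_symPair (e : Finset (ZMod (2 * k))) :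
    (symPair k e).map φ = symPair n (e.image φ) := by
  rw [symPair, DElem.map, Finset.image_insert, Finset.image_singleton, image_centralSym hsymm,
    symPair]

lemma isDiameter_image_iff (hφ : Function.Injective φ) (e : Finset (ZMod (2 * k))) :
    IsDiameter n (e.image φ) ↔ IsDiameter k e := by
  have image_diameter : ∀ i, ({i, i + (k : ZMod (2 * k))} : Finset (ZMod (2 * k))).image φ =
      {φ i, φ i + (n : ZMod (2 * n))} := by
    intro i
    rw [Finset.image_insert, Finset.image_singleton, hsymm]
  constructor
  · rintro ⟨u, hu⟩
    obtain ⟨i, -, rfl⟩ := Finset.mem_image.1 (hu ▸ Finset.mem_insert_self u _)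
    exact ⟨i, Finset.image_injective hφ (hu.trans (image_diameter i).symm)⟩
  · rintro ⟨i, rfl⟩
    exact ⟨φ i, image_diameter i⟩

lemma memM_map [NeZero k] [NeZero n] (hφ : IsCyclicEmbedding φ) {z : DElem k} (hz : memM k z) :
    memM n (z.map φ) := by
  have hdiam := isDiameter_image_iff hsymm hφ.injective
  cases z with
  | pair s =>
    obtain ⟨e, he, hne, rfl⟩ := hz
    exact ⟨e.image φ, hφ.isDiag_image he, mt (hdiam e).1 hne,
      DElem.pair.inj (map_symPair hsymm e)⟩
  | red e => exact ⟨hφ.isDiag_image hz.1, (hdiam e).2 hz.2⟩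
  | blue e => exact ⟨hφ.isDiag_image hz.1, (hdiam e).2 hz.2⟩

end equivariant

/-! ### Cutting the polygon along a symmetric pair -/

/-- The diagonal `{a, a + m}` of the `2n`-gon. -/
def chord (n m : ℕ) (a : ZMod (2 * n)) : Finset (ZMod (2 * n)) :=
  {a, a + (m : ZMod (2 * n))}

/-- The inclusion of the `(m + 1)`-gon with vertices `a, …, a + m` cut off by `chord n m a`. -/
def arcMap (n m : ℕ) (a : ZMod (2 * n)) : ZMod (m + 1) → ZMod (2 * n) :=
  polygonMap a id

/-- The inclusion of the `2(n - m + 1)`-gon between `chord n m a` and its opposite. Its vertices are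
numbered from `a + m` on, those from `n - m + 1` on lying beyond the opposite arc, so that opposite
vertices go to opposite vertices. -/
def centreMap (n m : ℕ) (a : ZMod (2 * n)) : ZMod (2 * (n - m + 1)) → ZMod (2 * n) :=
  polygonMap (a + m) fun t => if t < n - m + 1 then t else t + m - 1

section cut

variable {n m : ℕ} (a : ZMod (2 * n))

lemma arcMap_side (i : ZMod (m + 1)) :
    arcMap n m a (i + 1) = arcMap n m a i + 1 ∨
      {arcMap n m a i, arcMap n m a (i + 1)} ∈ ({chord n m a} : Set (Finset (ZMod (2 * n)))) := by
  obtain ⟨t, ht, rfl⟩ : ∃ t < m + 1, (t : ZMod (m + 1)) = i :=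
    ⟨i.val, i.val_lt, ZMod.natCast_zmod_val i⟩
  rcases (Nat.lt_succ_iff.1 ht).lt_or_eq with htm | rfl
  · left
    rw [← Nat.cast_succ, arcMap, polygonMap_natCast a id ht, polygonMap_natCast a id (by omega),
      id, id, Nat.cast_succ, add_assoc]
  · right
    rw [← Nat.cast_succ, ZMod.natCast_self, ← Nat.cast_zero, arcMap,
      polygonMap_natCast a id ht, polygonMap_natCast a id (by omega), id, id, Nat.cast_zero,
      add_zero, Finset.pair_comm]
    rfl

lemma centreMap_natCast {t : ℕ} (ht : t < n - m + 1) :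
    centreMap n m a (t : ZMod (2 * (n - m + 1))) = a + m + t := by
  rw [centreMap, polygonMap_natCast _ _ (by omega), if_pos ht]

lemma isCyclicEmbedding_arcMap [NeZero n] (hmn : m < n) : IsCyclicEmbedding (arcMap n m a) :=
  isCyclicEmbedding_polygonMap (strictMono_id.strictMonoOn _) (by simp only [id]; omega) a

variable (hmn : m < n)
include hmn

lemma centreMap_add (j : ZMod (2 * (n - m + 1))) :
    centreMap n m a (j + ((n - m + 1 : ℕ) : ZMod (2 * (n - m + 1)))) = centreMap n m a j + n := by
  have shifted : ∀ t < n - m + 1,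
      centreMap n m a (t + ((n - m + 1 : ℕ) : ZMod (2 * (n - m + 1)))) = a + m + t + n := by
    intro t ht
    rw [← Nat.cast_add, centreMap, polygonMap_natCast _ _ (by omega), if_neg (by omega),
      show t + (n - m + 1) + m - 1 = t + n by omega, Nat.cast_add, ← add_assoc]
  obtain ⟨t, ht, rfl | rfl⟩ := exists_natCast_eq_or_add_natCast_eq j
  · rw [shifted t ht, centreMap_natCast a ht]
  · rw [add_natCast_add_natCast, shifted t ht, centreMap_natCast a ht, add_natCast_add_natCast]

lemma chord_endpoint_add : a + m + ((n - m : ℕ) : ZMod (2 * n)) = a + n := by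
  rw [Nat.cast_sub hmn.le, add_assoc, add_sub_cancel]

lemma centreMap_side (i : ZMod (2 * (n - m + 1))) :
    centreMap n m a (i + 1) = centreMap n m a i + 1 ∨
      {centreMap n m a i, centreMap n m a (i + 1)} ∈
        ({chord n m a, centralSym n (chord n m a)} : Set (Finset (ZMod (2 * n)))) := by
  have corner : centreMap n m a ((n - m + 1 : ℕ) : ZMod (2 * (n - m + 1))) = a + m + n := by
    have h := centreMap_add a hmn ((0 : ℕ) : ZMod (2 * (n - m + 1)))
    rwa [centreMap_natCast a (Nat.succ_pos _), Nat.cast_zero, Nat.cast_zero, zero_add,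
      add_zero] at h
  have first_half : ∀ t < n - m + 1,
      centreMap n m a ((t : ZMod (2 * (n - m + 1))) + 1) = centreMap n m a t + 1 ∨
        ({centreMap n m a t, centreMap n m a ((t : ZMod (2 * (n - m + 1))) + 1)} : Finset _) =
          centralSym n (chord n m a) := by
    intro t ht
    rcases (Nat.lt_succ_iff.1 ht).lt_or_eq with hlt | rfl
    · left
      rw [← Nat.cast_succ, centreMap_natCast a (by omega), centreMap_natCast a ht, Nat.cast_succ,
        ← add_assoc]
    · right
      rw [← Nat.cast_succ, corner, centreMap_natCast a ht, chord_endpoint_add a hmn, chord,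
        centralSym_pair]
  obtain ⟨t, ht, rfl | rfl⟩ := exists_natCast_eq_or_add_natCast_eq i
  · exact (first_half t ht).imp id .inr
  · rw [add_right_comm, centreMap_add a hmn, centreMap_add a hmn, add_right_comm,
      ← centralSym_pair]
    refine (first_half t ht).imp (congrArg (· + (n : ZMod (2 * n)))) fun h => .inl ?_
    rw [h, centralSym_centralSym]

variable (hm : 0 < m)
include hm

lemma chord_endpoints_ne : a ≠ a + m := by
  intro h
  have hval := val_add_natCast_sub a (show m < 2 * n by omega)
  rw [← h, sub_self, ZMod.val_zero] at hval
  omega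

variable [NeZero n]

lemma isCyclicEmbedding_centreMap : IsCyclicEmbedding (centreMap n m a) := by
  refine isCyclicEmbedding_polygonMap ?_ ?_ _
  · intro s _ t _ hst
    dsimp only
    split_ifs <;> omega
  · intro t ht
    split_ifs <;> omega

lemma range_arcMap : Set.range (arcMap n m a) = Set.cIcc a (a + m) := by
  ext x
  rw [arcMap, mem_range_polygonMap_iff (by simp only [id]; omega),
    mem_cIcc_add_natCast_iff a x hm (by omega)]
  simp only [id, exists_eq_right, Nat.lt_succ_iff]

lemma range_centreMap :
    Set.range (centreMap n m a) = Set.cIcc (a + m) a ∩ Set.cIcc (a + m + n) (a + n) := by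
  have hval : (a + m + n - (a + m)).val = n := val_add_natCast_sub _ (by omega)
  have hval_opposite : (a + n - (a + m)).val = n - m := by
    rw [← chord_endpoint_add a hmn]
    exact val_add_natCast_sub _ (by omega)
  have hval_left : (a - (a + m)).val = n - m + n := by
    have ha : a = a + m + ((n - m + n : ℕ) : ZMod (2 * n)) := by
      rw [Nat.cast_add, ← add_assoc, chord_endpoint_add a hmn, add_natCast_add_natCast]
    exact (congrArg (fun x => (x - (a + m)).val) ha).trans (val_add_natCast_sub _ (by omega))
  ext x
  have hx := (x - (a + m)).val_lt
  rw [centreMap, mem_range_polygonMap_iff (by intros; split_ifs <;> omega), Set.mem_inter_iff,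
    Set.mem_cIcc, Set.mem_cIcc, btw_iff_not_sbtw, btw_iff_not_sbtw,
    ← sbtw_sub_right_iff (a + (m : ZMod (2 * n))) a,
    ← sbtw_sub_right_iff (a + (m : ZMod (2 * n))) (a + (n : ZMod (2 * n)))]
  simp only [sbtw_iff_val, sub_self, ZMod.val_zero, hval, hval_opposite, hval_left]
  constructor
  · rintro ⟨t, ht, hgt⟩
    split_ifs at hgt <;> omega
  · intro h
    rcases le_or_gt (x - (a + m)).val (n - m) with hle | hlt
    · exact ⟨_, by omega, if_pos (by omega)⟩
    · refine ⟨(x - (a + m)).val + 1 - m, by omega, ?_⟩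
      rw [if_neg (by omega)]
      omega

lemma disjoint_cIcc_opposite :
    Disjoint (Set.cIcc a (a + m)) (Set.cIcc (a + n) (a + m + n)) := by
  rw [Set.disjoint_left]
  intro x hx hx'
  rw [mem_cIcc_add_natCast_iff a x hm (by omega)] at hx
  rw [add_right_comm, mem_cIcc_add_natCast_iff (a + (n : ZMod (2 * n))) x hm (by omega)] at hx'
  obtain ⟨t, ht, rfl⟩ : ∃ t ≤ m, a + ((n + t : ℕ) : ZMod (2 * n)) = x :=
    ⟨_, hx', by rw [Nat.cast_add, ZMod.natCast_zmod_val, ← add_assoc, add_sub_cancel]⟩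
  rw [val_add_natCast_sub a (by omega)] at hx
  omega

lemma centralSym_subset_cIcc {e : Finset (ZMod (2 * n))}
    (he : (e : Set (ZMod (2 * n))) ⊆ Set.cIcc a (a + m)) :
    (centralSym n e : Set (ZMod (2 * n))) ⊆ Set.cIcc (a + m) a := by
  intro x hx
  have hx_compl : x ∈ (Set.cIcc a (a + m))ᶜ :=
    (disjoint_cIcc_opposite a hmn hm).notMem_of_mem_right
      ((centralSym_subset_cIcc_iff e _ _).2 he hx)
  rw [Set.compl_cIcc] at hx_compl
  exact btw_of_sbtw hx_compl

lemma not_isDiameter_of_subset_cIcc {e : Finset (ZMod (2 * n))}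
    (he : (e : Set (ZMod (2 * n))) ⊆ Set.cIcc a (a + m)) : ¬ IsDiameter n e := by
  intro hdiam
  have he_opposite := (centralSym_subset_cIcc_iff e _ _).2 he
  rw [hdiam.centralSym_eq] at he_opposite
  obtain ⟨u, rfl⟩ := hdiam
  have hu : u ∈ (({u, u + (n : ZMod (2 * n))} : Finset (ZMod (2 * n))) : Set (ZMod (2 * n))) :=
    Finset.mem_insert_self u _
  exact (disjoint_cIcc_opposite a hmn hm).notMem_of_mem_left (he hu) (he_opposite hu)

end cut

section link

variable {n m : ℕ} (a : ZMod (2 * n))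

lemma exists_isDiag_image_centreMap_eq (hmn : m < n) {e : Finset (ZMod (2 * n))}
    (he : IsDiag (2 * n) e) (hne : symPair n e ≠ symPair n (chord n m a))
    (hsub : (e : Set (ZMod (2 * n))) ⊆ Set.range (centreMap n m a)) :
    ∃ e', IsDiag (2 * (n - m + 1)) e' ∧ e'.image (centreMap n m a) = e := by
  refine exists_isDiag_image_eq (centreMap_side a hmn) he ?_ hsub
  rintro (rfl | rfl)
  · exact hne rfl
  · exact hne (symPair_centralSym _)

lemma chord_subset_cIcc [NeZero n] :
    (chord n m a : Set (ZMod (2 * n))) ⊆ Set.cIcc a (a + m) ∧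
      (chord n m a : Set (ZMod (2 * n))) ⊆ Set.cIcc (a + m) a := by
  rw [chord, Finset.coe_pair, Set.pair_subset_iff, Set.pair_subset_iff]
  exact ⟨⟨Set.left_mem_cIcc _ _, Set.right_mem_cIcc _ _⟩,
    ⟨Set.right_mem_cIcc _ _, Set.left_mem_cIcc _ _⟩⟩

/-- The element of the link of `{d, d̄}`, where `d = chord n m a`, that corresponds to a diagonal of
the arc polygon or to an element of the type `D` model of the central polygon. -/
def linkElem (n m : ℕ) (a : ZMod (2 * n)) :
    {e : Finset (ZMod (m + 1)) // IsDiag (m + 1) e} ⊕ MSet (n - m + 1) → DElem n :=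
  Sum.elim (fun e => symPair n (e.1.image (arcMap n m a)))
    (fun z => z.1.map (centreMap n m a))

variable [NeZero n] (hmn : m < n) (hm : 0 < m)
include hmn hm

lemma image_arcMap_subset (e : Finset (ZMod (m + 1))) :
    (e.image (arcMap n m a) : Set (ZMod (2 * n))) ⊆ Set.cIcc a (a + m) := by
  rw [Finset.coe_image, ← range_arcMap a hmn hm]
  exact Set.image_subset_range _ _

lemma not_image_arcMap_subset {e : Finset (ZMod (m + 1))} (he : IsDiag (m + 1) e) :
    ¬ (e.image (arcMap n m a) : Set (ZMod (2 * n))) ⊆ Set.cIcc (a + m) a :=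
  (isCyclicEmbedding_arcMap a hmn).not_image_subset_cIcc (chord_endpoints_ne a hmn hm)
    (range_arcMap a hmn hm).subset he

lemma not_image_centreMap_subset {e : Finset (ZMod (2 * (n - m + 1)))}
    (he : IsDiag (2 * (n - m + 1)) e) :
    ¬ (e.image (centreMap n m a) : Set (ZMod (2 * n))) ⊆ Set.cIcc a (a + m) :=
  (isCyclicEmbedding_centreMap a hmn hm).not_image_subset_cIcc (chord_endpoints_ne a hmn hm).symm
    ((range_centreMap a hmn hm).trans_subset Set.inter_subset_left) he

lemma dCompat_symPair_iff_of_subset {e f : Finset (ZMod (2 * n))}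
    (he : (e : Set (ZMod (2 * n))) ⊆ Set.cIcc a (a + m))
    (hf : (f : Set (ZMod (2 * n))) ⊆ Set.cIcc a (a + m)) :
    DCompat n (symPair n e) (symPair n f) ↔ ¬ Crosses (2 * n) e f := by
  rw [dCompat_symPair_iff, and_iff_left]
  exact not_crosses_of_subset_cIcc (chord_endpoints_ne a hmn hm) he
    (centralSym_subset_cIcc a hmn hm hf)

lemma dCompat_symPair_image_arcMap_iff (e f : Finset (ZMod (m + 1))) :
    DCompat n (symPair n (e.image (arcMap n m a))) (symPair n (f.image (arcMap n m a))) ↔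
      ¬ Crosses (m + 1) e f := by
  rw [dCompat_symPair_iff_of_subset a hmn hm (image_arcMap_subset a hmn hm e)
    (image_arcMap_subset a hmn hm f), (isCyclicEmbedding_arcMap a hmn).crosses_image_iff]

lemma dCompat_symPair_map_centreMap {e : Finset (ZMod (2 * n))}
    (he : (e : Set (ZMod (2 * n))) ⊆ Set.cIcc a (a + m)) (z : DElem (n - m + 1)) :
    DCompat n (symPair n e) (z.map (centreMap n m a)) := by
  have hne := chord_endpoints_ne a hmn hm
  refine dCompat_pair_iff.2 fun e' he' f hf => ?_
  have hf_centre := DElem.subset_range_of_mem_diagonals_map hf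
  rw [range_centreMap a hmn hm, Set.subset_inter_iff] at hf_centre
  rcases Finset.mem_insert.1 he' with rfl | he'
  · exact not_crosses_of_subset_cIcc hne he hf_centre.1
  · rw [Finset.mem_singleton.1 he']
    exact not_crosses_of_subset_cIcc ((add_left_injective _).ne hne)
      ((centralSym_subset_cIcc_iff e _ _).2 he) hf_centre.2

lemma memM_linkElem (w) : memM n (linkElem n m a w) := by
  rcases w with e | z
  · exact ⟨_, (isCyclicEmbedding_arcMap a hmn).isDiag_image e.2,
      not_isDiameter_of_subset_cIcc a hmn hm (image_arcMap_subset a hmn hm e.1), rfl⟩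
  · exact memM_map (centreMap_add a hmn) (isCyclicEmbedding_centreMap a hmn hm) z.2

lemma dCompat_chord_linkElem (w) :
    DCompat n (symPair n (chord n m a)) (linkElem n m a w) := by
  have hchord := chord_subset_cIcc (m := m) a
  rcases w with e | z
  · have he := image_arcMap_subset a hmn hm e.1
    rw [linkElem, Sum.elim_inl, dCompat_symPair_iff_of_subset a hmn hm hchord.1 he, crosses_comm]
    exact not_crosses_of_subset_cIcc (chord_endpoints_ne a hmn hm) he hchord.2
  · exact dCompat_symPair_map_centreMap a hmn hm hchord.1 z.1

lemma symPair_image_arcMap_ne {e : Finset (ZMod (m + 1))} (he : IsDiag (m + 1) e)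
    {f : Finset (ZMod (2 * n))} (hf : (f : Set (ZMod (2 * n))) ⊆ Set.cIcc a (a + m))
    (hne : e.image (arcMap n m a) ≠ f) :
    symPair n (e.image (arcMap n m a)) ≠ symPair n f := by
  intro h
  refine not_image_arcMap_subset a hmn hm he ?_
  rw [(eq_or_eq_centralSym_of_symPair_eq h).resolve_left hne]
  exact centralSym_subset_cIcc a hmn hm hf

lemma linkElem_ne_chord (w) : linkElem n m a w ≠ symPair n (chord n m a) := by
  have hchord := chord_subset_cIcc (m := m) a
  rcases w with e | z
  · refine symPair_image_arcMap_ne a hmn hm e.2 hchord.1 fun h => ?_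
    exact not_image_arcMap_subset a hmn hm e.2 (h ▸ hchord.2)
  · intro h
    have hmem : chord n m a ∈ (z.1.map (centreMap n m a)).diagonals := by
      rw [show z.1.map (centreMap n m a) = _ from h]
      exact Finset.mem_insert_self _ _
    rw [DElem.diagonals_map] at hmem
    obtain ⟨e, he, hchord_eq⟩ := Finset.mem_image.1 hmem
    exact not_image_centreMap_subset a hmn hm (isDiag_of_mem_diagonals z.2 he)
      (hchord_eq ▸ hchord.1)

lemma symPair_image_arcMap_ne_map_centreMap {e : Finset (ZMod (m + 1))} (he : IsDiag (m + 1) e)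
    (z : DElem (n - m + 1)) :
    symPair n (e.image (arcMap n m a)) ≠ z.map (centreMap n m a) := by
  intro h
  have hmem : e.image (arcMap n m a) ∈ (z.map (centreMap n m a)).diagonals := by
    rw [← h]
    exact Finset.mem_insert_self _ _
  refine not_image_arcMap_subset a hmn hm he
    ((DElem.subset_range_of_mem_diagonals_map hmem).trans ?_)
  exact (range_centreMap a hmn hm).trans_subset Set.inter_subset_left

lemma linkElem_injective : Function.Injective (linkElem n m a) := by
  have harc := (isCyclicEmbedding_arcMap a hmn).injective
  rintro (e | z) (f | w) h
  · by_contra hne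
    refine symPair_image_arcMap_ne a hmn hm e.2 (image_arcMap_subset a hmn hm f.1) ?_ h
    exact (Finset.image_injective harc).ne fun hef => hne (congrArg _ (Subtype.ext hef))
  · exact absurd h (symPair_image_arcMap_ne_map_centreMap a hmn hm e.2 w.1)
  · exact absurd h.symm (symPair_image_arcMap_ne_map_centreMap a hmn hm f.2 z.1)
  · exact congrArg _ (Subtype.ext
      (DElem.map_injective (isCyclicEmbedding_centreMap a hmn hm).injective h))

lemma subset_cases_of_dCompat_chord {y : DElem n}
    (hy : DCompat n (symPair n (chord n m a)) y) {e : Finset (ZMod (2 * n))}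
    (he : e ∈ y.diagonals) (he_diag : IsDiag (2 * n) e) :
    (e : Set (ZMod (2 * n))) ⊆ Set.cIcc a (a + m) ∨
      (centralSym n e : Set (ZMod (2 * n))) ⊆ Set.cIcc a (a + m) ∨
      (e : Set (ZMod (2 * n))) ⊆ Set.range (centreMap n m a) := by
  have hchord : ¬ Crosses (2 * n) (chord n m a) e :=
    dCompat_pair_iff.1 hy _ (Finset.mem_insert_self _ _) e he
  have hopposite : ¬ Crosses (2 * n) (centralSym n (chord n m a)) e :=
    dCompat_pair_iff.1 hy _ (Finset.mem_insert_of_mem (Finset.mem_singleton_self _)) e he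
  obtain ⟨u, v, rfl, -⟩ := id he_diag
  rw [chord, centralSym_pair] at hopposite
  rw [range_centreMap a hmn hm, Set.subset_inter_iff,
    ← centralSym_subset_cIcc_iff (centralSym n _), centralSym_centralSym]
  have chord_sides := subset_cIcc_or_of_not_crosses hchord
  have opposite_sides := subset_cIcc_or_of_not_crosses hopposite
  tauto

lemma exists_linkElem_eq_of_subset_cIcc {e : Finset (ZMod (2 * n))} (he : IsDiag (2 * n) e)
    (hne : symPair n e ≠ symPair n (chord n m a))
    (hsub : (e : Set (ZMod (2 * n))) ⊆ Set.cIcc a (a + m)) :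
    ∃ w, linkElem n m a w = symPair n e := by
  obtain ⟨e', he', rfl⟩ := exists_isDiag_image_eq (arcMap_side a) he
    (fun h => hne (congrArg _ h)) (hsub.trans (range_arcMap a hmn hm).superset)
  exact ⟨.inl ⟨e', he'⟩, rfl⟩

lemma exists_linkElem_eq_symPair {e : Finset (ZMod (2 * n))} (he : IsDiag (2 * n) e)
    (hdiam : ¬ IsDiameter n e) (hne : symPair n e ≠ symPair n (chord n m a))
    (hcompat : DCompat n (symPair n (chord n m a)) (symPair n e)) :
    ∃ w, linkElem n m a w = symPair n e := by
  rcases subset_cases_of_dCompat_chord a hmn hm hcompat (Finset.mem_insert_self _ _) he with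
    harc | hopposite | hcentre
  · exact exists_linkElem_eq_of_subset_cIcc a hmn hm he hne harc
  · rw [← symPair_centralSym e] at hne ⊢
    exact exists_linkElem_eq_of_subset_cIcc a hmn hm he.centralSym hne hopposite
  · obtain ⟨e', he', rfl⟩ := exists_isDiag_image_centreMap_eq a hmn he hne hcentre
    have hdiam' := mt (isDiameter_image_iff (centreMap_add a hmn)
      (isCyclicEmbedding_centreMap a hmn hm).injective e').2 hdiam
    exact ⟨.inr ⟨symPair _ e', e', he', hdiam', rfl⟩, map_symPair (centreMap_add a hmn) e'⟩

lemma exists_diameter_image_centreMap_eq {y : DElem n}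
    (hy : DCompat n (symPair n (chord n m a)) y) {e : Finset (ZMod (2 * n))}
    (he_mem : e ∈ y.diagonals) (he : IsDiag (2 * n) e) (hdiam : IsDiameter n e) :
    ∃ e', (IsDiag (2 * (n - m + 1)) e' ∧ IsDiameter (n - m + 1) e') ∧
      e'.image (centreMap n m a) = e := by
  have not_subset : ¬ (e : Set (ZMod (2 * n))) ⊆ Set.cIcc a (a + m) :=
    fun h => not_isDiameter_of_subset_cIcc a hmn hm h hdiam
  have hcentre := subset_cases_of_dCompat_chord a hmn hm hy he_mem he
  rw [hdiam.centralSym_eq] at hcentre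
  have hne : symPair n e ≠ symPair n (chord n m a) := by
    intro h
    rcases eq_or_eq_centralSym_of_symPair_eq h.symm with heq | heq
    · exact not_subset (heq ▸ (chord_subset_cIcc a).1)
    · exact not_subset (hdiam.centralSym_eq ▸ heq ▸ (chord_subset_cIcc a).1)
  obtain ⟨e', he', rfl⟩ := exists_isDiag_image_centreMap_eq a hmn he hne
    ((hcentre.resolve_left not_subset).resolve_left not_subset)
  exact ⟨e', ⟨he', (isDiameter_image_iff (centreMap_add a hmn)
    (isCyclicEmbedding_centreMap a hmn hm).injective e').1 hdiam⟩, rfl⟩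

lemma exists_linkElem_eq {y : DElem n} (hy : memM n y) (hne : y ≠ symPair n (chord n m a))
    (hcompat : DCompat n (symPair n (chord n m a)) y) : ∃ w, linkElem n m a w = y := by
  cases y with
  | pair s =>
    obtain ⟨e, he, hdiam, rfl⟩ := hy
    exact exists_linkElem_eq_symPair a hmn hm he hdiam hne hcompat
  | red e =>
    obtain ⟨e', he', rfl⟩ := exists_diameter_image_centreMap_eq a hmn hm hcompat
      (Finset.mem_singleton_self e) hy.1 hy.2
    exact ⟨.inr ⟨.red e', he'⟩, rfl⟩
  | blue e =>
    obtain ⟨e', he', rfl⟩ := exists_diameter_image_centreMap_eq a hmn hm hcompat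
      (Finset.mem_singleton_self e) hy.1 hy.2
    exact ⟨.inr ⟨.blue e', he'⟩, rfl⟩

end link

/-- the link of a symmetric pair `x = {d, d̄}`, `d = {a, a+m}`,
`2 ≤ m ≤ n-1`, is the join of the type `A_{m-2}` model (the diagonals of an
`(m+1)`-gon, empty for `m = 2`) and the type `D_{n-m+1}` model. -/
theorem link_of_pair (n : ℕ) (hn : 3 ≤ n) (m : ℕ) (hm2 : 2 ≤ m) (hmn : m ≤ n - 1)
    (a : ZMod (2 * n)) (x : MSet n)
    (hx : x.1 = DElem.pair
      {({a, a + (m : ZMod (2 * n))} : Finset (ZMod (2 * n))),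
        centralSym n {a, a + (m : ZMod (2 * n))}}) :
    ∃ β : {y : MSet n // y ≠ x ∧ DCompat n x.1 y.1} ≃
          ({e : Finset (ZMod (m + 1)) // IsDiag (m + 1) e} ⊕ MSet (n - m + 1)),
      (∀ y₁ y₂ e₁ e₂, y₁ ≠ y₂ → β y₁ = Sum.inl e₁ → β y₂ = Sum.inl e₂ →
        (DCompat n y₁.1.1 y₂.1.1 ↔ ¬ Crosses (m + 1) e₁.1 e₂.1)) ∧
      (∀ y₁ y₂ z₁ z₂, y₁ ≠ y₂ → β y₁ = Sum.inr z₁ → β y₂ = Sum.inr z₂ →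
        (DCompat n y₁.1.1 y₂.1.1 ↔ DCompat (n - m + 1) z₁.1 z₂.1)) ∧
      (∀ y₁ y₂ e z, β y₁ = Sum.inl e → β y₂ = Sum.inr z →
        DCompat n y₁.1.1 y₂.1.1) := by
  have : NeZero n := ⟨by omega⟩
  have hm : 0 < m := by omega
  replace hmn : m < n := by omega
  change x.1 = symPair n (chord n m a) at hx
  let γ (w) : {y : MSet n // y ≠ x ∧ DCompat n x.1 y.1} :=
    ⟨⟨linkElem n m a w, memM_linkElem a hmn hm w⟩,
      fun h => linkElem_ne_chord a hmn hm w ((congrArg Subtype.val h).trans hx),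
      hx ▸ dCompat_chord_linkElem a hmn hm w⟩
  have hγ : Function.Bijective γ := by
    refine ⟨fun w w' h => linkElem_injective a hmn hm (congrArg (·.1.1) h), fun y => ?_⟩
    obtain ⟨w, hw⟩ := exists_linkElem_eq a hmn hm y.1.2
      (fun h => y.2.1 (Subtype.ext (h.trans hx.symm))) (hx ▸ y.2.2)
    exact ⟨w, Subtype.ext (Subtype.ext hw)⟩
  refine ⟨(Equiv.ofBijective γ hγ).symm, ?_, ?_, ?_⟩
  all_goals
    intro y₁ y₂ w₁ w₂
    simp only [Equiv.symm_apply_eq]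
  · rintro - rfl rfl
    exact dCompat_symPair_image_arcMap_iff a hmn hm _ _
  · rintro - rfl rfl
    exact (isCyclicEmbedding_centreMap a hmn hm).dCompat_map_iff _ _
  · rintro rfl rfl
    exact dCompat_symPair_map_centreMap a hmn hm (image_arcMap_subset a hmn hm _) _

end GalD
end

section
/- Let B be a connected building set on [m] with m ≥ 2, and let S ∈ B with S ≠ [m]. Then the subset of the nestohedron P_B on which the linear functional x ↦ ∑_{i∈S} x_i attains its minimum is a facet of P_B, and this facet is combinatorially equivalent to the product P_{B|_S} × P_{B/S}, where B|_S = {S' ∈ B : S' ⊆ S} is a connected building set on S and B/S = {S'' \ S : S'' ∈ B, S'' ⊄ S} is a connected building set on [m] \ S. Moreover, the assignment S ↦ (facet on which ∑_{i∈S} x_i is minimized) is a bijection from B \ {[m]} to the set of facets of P_B. -/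
open Pointwise

namespace GalD

/-!
Faces of a Minkowski sum are sums of faces of the summands, so the face of `∑ Δ_T` maximizing a
weight `w` is `∑ Δ_{argmax w T}`, and inclusions of faces are inclusions of the sets `argmax w T`.
For `w = -1_S` these sets are `T` if `T ⊆ S` and `T \ S` otherwise, that is, the members of `B|_S`
and `B/S`; hence the minimizing face of `S` has the normal fan of `P_{B|_S} × P_{B/S}`, up to
repeated summands. The span of a sum of simplices loses one dimension for each connected block of
indices: one block for `P_B`, the two blocks `S` and `[m] \ S` for the minimizing face of `S`.
Conversely, the facet maximizing `w` lies in the minimizing face of a maximal `S ∈ B` avoiding the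
maximizers of `w`, and having the same dimension, it is equal to it.
-/

/-! ### Exposed faces -/

theorem nonempty_finsetSum {κ E : Type*} [AddCommMonoid E] {s : Finset κ} {K : κ → Set E}
    (hK : ∀ t ∈ s, (K t).Nonempty) : (∑ t ∈ s, K t).Nonempty := by
  choose! x hx using hK
  exact ⟨∑ t ∈ s, x t, Set.finsetSum_mem_finsetSum s K x hx⟩

section ExposedFaces

variable {E : Type*} [AddCommGroup E] [Module ℝ E] [TopologicalSpace E]

theorem add_mem_toExposed_add_iff (l : StrongDual ℝ E) {A B : Set E} {a b : E} (ha : a ∈ A)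
    (hb : b ∈ B) : a + b ∈ l.toExposed (A + B) ↔ a ∈ l.toExposed A ∧ b ∈ l.toExposed B := by
  constructor
  · rintro ⟨-, hmax⟩
    refine ⟨⟨ha, fun y hy => ?_⟩, ⟨hb, fun y hy => ?_⟩⟩
    · simpa using hmax (y + b) (Set.add_mem_add hy hb)
    · simpa using hmax (a + y) (Set.add_mem_add ha hy)
  · rintro ⟨⟨-, hamax⟩, -, hbmax⟩
    refine ⟨Set.add_mem_add ha hb, ?_⟩
    rintro _ ⟨a', ha', b', hb', rfl⟩
    simpa only [map_add] using add_le_add (hamax a' ha') (hbmax b' hb')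

theorem toExposed_add (l : StrongDual ℝ E) (A B : Set E) :
    l.toExposed (A + B) = l.toExposed A + l.toExposed B := by
  apply Set.Subset.antisymm
  · intro x hx
    obtain ⟨a, ha, b, hb, rfl⟩ := hx.1
    obtain ⟨ha', hb'⟩ := (add_mem_toExposed_add_iff l ha hb).1 hx
    exact Set.add_mem_add ha' hb'
  · rintro _ ⟨a, ha, b, hb, rfl⟩
    exact (add_mem_toExposed_add_iff l ha.1 hb.1).2 ⟨ha, hb⟩

theorem toExposed_zero (l : StrongDual ℝ E) : l.toExposed (0 : Set E) = 0 := by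
  ext x
  simp +contextual [ContinuousLinearMap.toExposed]

theorem toExposed_finsetSum {κ : Type*} (l : StrongDual ℝ E) (s : Finset κ) (K : κ → Set E) :
    l.toExposed (∑ t ∈ s, K t) = ∑ t ∈ s, l.toExposed (K t) := by
  classical
  induction s using Finset.induction_on with
  | empty => simp only [Finset.sum_empty, toExposed_zero]
  | insert t s ht ih => rw [Finset.sum_insert ht, Finset.sum_insert ht, toExposed_add, ih]

theorem toExposed_add_subset_iff {l l' : StrongDual ℝ E} {A B : Set E}
    (hA : (l.toExposed A).Nonempty) (hB : (l.toExposed B).Nonempty) :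
    l.toExposed (A + B) ⊆ l'.toExposed (A + B) ↔
      l.toExposed A ⊆ l'.toExposed A ∧ l.toExposed B ⊆ l'.toExposed B := by
  obtain ⟨a, ha⟩ := hA
  obtain ⟨b, hb⟩ := hB
  constructor
  · intro h
    have split : ∀ x ∈ l.toExposed A, ∀ y ∈ l.toExposed B,
        x ∈ l'.toExposed A ∧ y ∈ l'.toExposed B := fun x hx y hy =>
      (add_mem_toExposed_add_iff l' hx.1 hy.1).1
        (h ((add_mem_toExposed_add_iff l hx.1 hy.1).2 ⟨hx, hy⟩))
    exact ⟨fun x hx => (split x hx b hb).1, fun y hy => (split a ha y hy).2⟩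
  · rintro ⟨hA, hB⟩
    rw [toExposed_add, toExposed_add]
    exact Set.add_subset_add hA hB

theorem toExposed_finsetSum_subset_iff {κ : Type*} {l l' : StrongDual ℝ E} {s : Finset κ}
    {K : κ → Set E} (hK : ∀ t ∈ s, (l.toExposed (K t)).Nonempty) :
    l.toExposed (∑ t ∈ s, K t) ⊆ l'.toExposed (∑ t ∈ s, K t) ↔
      ∀ t ∈ s, l.toExposed (K t) ⊆ l'.toExposed (K t) := by
  classical
  induction s using Finset.induction_on with
  | empty => simp [toExposed_zero]
  | insert t s ht ih =>
    rw [Finset.forall_mem_insert] at hK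
    have hsum : (l.toExposed (∑ t ∈ s, K t)).Nonempty := by
      rw [toExposed_finsetSum]
      exact nonempty_finsetSum hK.2
    rw [Finset.sum_insert ht, toExposed_add_subset_iff hK.1 hsum, ih hK.2,
      Finset.forall_mem_insert]

theorem toExposed_convexHull (l : StrongDual ℝ E) (s : Set E) :
    l.toExposed (convexHull ℝ s) = convexHull ℝ (l.toExposed s) := by
  have exposed : IsExposed ℝ (convexHull ℝ s) (l.toExposed (convexHull ℝ s)) := fun _ => ⟨l, rfl⟩
  apply Set.Subset.antisymm
  · -- The exposed face is extreme: a segment meets it only if both endpoints lie in it.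
    suffices hull_subset : convexHull ℝ s ⊆ {x | x ∈ convexHull ℝ s ∧
        (x ∈ l.toExposed (convexHull ℝ s) → x ∈ convexHull ℝ (l.toExposed s))} from
      fun x hx => (hull_subset hx.1).2 hx
    refine convexHull_min (fun x hx => ⟨subset_convexHull ℝ s hx, fun hxface => ?_⟩)
      (convex_iff_openSegment_subset.2 ?_)
    · exact subset_convexHull ℝ (l.toExposed s)
        ⟨hx, fun y hy => hxface.2 y (subset_convexHull ℝ s hy)⟩
    · rintro x ⟨hx, hxface⟩ y ⟨hy, hyface⟩ z hz
      refine ⟨(convex_convexHull ℝ s).openSegment_subset hx hy hz, fun hzface => ?_⟩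
      have hx' := exposed.isExtreme.left_mem_of_mem_openSegment hx hy hzface hz
      have hy' := exposed.isExtreme.right_mem_of_mem_openSegment hx hy hzface hz
      exact (convex_convexHull ℝ _).openSegment_subset (hxface hx') (hyface hy') hz
  · have subset_face : l.toExposed s ⊆ l.toExposed (convexHull ℝ s) := fun x hx =>
      ⟨subset_convexHull ℝ s hx.1, fun y hy =>
        convexHull_min hx.2 (convex_halfSpace_le l.isLinear (l x)) hy⟩
    exact convexHull_min subset_face (exposed.convex (convex_convexHull ℝ s))

theorem inter_affineSpan_eq_of_isExposed {F P : Set E} (hF : IsExposed ℝ P F) :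
    P ∩ affineSpan ℝ F = F := by
  rcases F.eq_empty_or_nonempty with rfl | ⟨p, hp⟩
  · simp
  apply Set.Subset.antisymm
  · rintro x ⟨hxP, hx⟩
    obtain ⟨l, rfl⟩ := hF ⟨p, hp⟩
    have const : Set.EqOn l.toAffineMap (AffineMap.const ℝ E (l p)) {x ∈ P | ∀ y ∈ P, l y ≤ l x} :=
      fun y hy => le_antisymm (hp.2 y hy.1) (hy.2 p hp.1)
    have hlx : l x = l p := AffineMap.eqOn_affineSpan const hx
    exact ⟨hxP, fun y hy => hlx ▸ hp.2 y hy⟩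
  · exact Set.subset_inter hF.subset (subset_affineSpan ℝ F)

end ExposedFaces

/-! ### Minkowski sums of coordinate simplices -/

section SimplexSum

variable {ι κ α : Type*} [LinearOrder α]

/-- The maximizers of the weight `w` on `T`. They span the face of the simplex `Δ_T` on which the
linear functional with coefficients `w` is maximal. -/
def argmax (w : ι → α) (T : Finset ι) : Finset ι :=
  {i ∈ T | ∀ j ∈ T, w j ≤ w i}

theorem mem_argmax {w : ι → α} {T : Finset ι} {i : ι} :
    i ∈ argmax w T ↔ i ∈ T ∧ ∀ j ∈ T, w j ≤ w i :=
  Finset.mem_filter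

theorem argmax_subset (w : ι → α) (T : Finset ι) : argmax w T ⊆ T :=
  Finset.filter_subset _ _

theorem argmax_eq_self_iff {w : ι → α} {T : Finset ι} :
    argmax w T = T ↔ ∀ i ∈ T, ∀ j ∈ T, w j ≤ w i :=
  Finset.filter_eq_self

theorem argmax_nonempty (w : ι → α) {T : Finset ι} (hT : T.Nonempty) : (argmax w T).Nonempty := by
  obtain ⟨i, hi⟩ := T.exists_max_image w hT
  exact ⟨i, mem_argmax.2 hi⟩

theorem argmax_congr {w w' : ι → α} {T : Finset ι} (h : ∀ i ∈ T, w i = w' i) :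
    argmax w T = argmax w' T :=
  Finset.filter_congr fun i hi => forall₂_congr fun j hj => by rw [h i hi, h j hj]

theorem argmax_eq_self_of_subset {w : ι → α} {T V : Finset ι} (hTV : T ⊆ V)
    (hV : argmax w V = V) : argmax w T = T :=
  argmax_eq_self_iff.2 fun i hi j hj => argmax_eq_self_iff.1 hV i (hTV hi) j (hTV hj)

theorem argmax_subset_argmax_of_mem {w : ι → α} {T V : Finset ι} {i : ι} (hTV : T ⊆ V)
    (hiT : i ∈ T) (hi : i ∈ argmax w V) : argmax w T ⊆ argmax w V := fun _ hj =>
  have ⟨hjT, hjmax⟩ := mem_argmax.1 hj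
  mem_argmax.2 ⟨hTV hjT, fun k hk => ((mem_argmax.1 hi).2 k hk).trans (hjmax i hiT)⟩

variable [DecidableEq ι]

/-- The simplex `Δ_T`, the convex hull of the standard basis vectors indexed by `T`. -/
def simplex (T : Finset ι) : Set (ι → ℝ) :=
  convexHull ℝ ((fun i => Pi.single i 1) '' (T : Set ι))

/-- The Minkowski sum of the simplices `Δ_{A t}`, `t ∈ s`. The family is indexed because faces of
nestohedra are sums in which a simplex may be repeated. -/
noncomputable def simplexSum (s : Finset κ) (A : κ → Finset ι) : Set (ι → ℝ) :=
  ∑ t ∈ s, simplex (A t)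

theorem single_mem_simplex_iff {T : Finset ι} {i : ι} : Pi.single i 1 ∈ simplex T ↔ i ∈ T := by
  refine ⟨fun h => ?_, fun hi => subset_convexHull ℝ _ (Set.mem_image_of_mem _ hi)⟩
  by_contra hi
  have vanish : simplex T ⊆ LinearMap.ker (LinearMap.proj i : (ι → ℝ) →ₗ[ℝ] ℝ) := by
    refine convexHull_min ?_ (Submodule.convex _)
    rintro _ ⟨j, hj, rfl⟩
    have hij : i ≠ j := fun hij => hi (by rwa [hij])
    exact Pi.single_eq_of_ne hij 1
  simpa using vanish h

theorem simplex_nonempty {T : Finset ι} (hT : T.Nonempty) : (simplex T).Nonempty :=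
  let ⟨_, hi⟩ := hT
  ⟨_, single_mem_simplex_iff.2 hi⟩

theorem simplex_subset_simplex_iff {T U : Finset ι} : simplex T ⊆ simplex U ↔ T ⊆ U :=
  ⟨fun h _ hi => single_mem_simplex_iff.1 (h (single_mem_simplex_iff.2 hi)),
    fun h => convexHull_mono (Set.image_mono (Finset.coe_subset.2 h))⟩

variable [Fintype ι]

/-- The continuous linear functional `x ↦ w ⬝ᵥ x` with coefficient vector `w`. -/
noncomputable def dotDual : (ι → ℝ) ≃ₗ[ℝ] StrongDual ℝ (ι → ℝ) :=
  dotProductEquiv ℝ ι ≪≫ₗ LinearMap.toContinuousLinearMap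

theorem dotDual_apply (w x : ι → ℝ) : dotDual w x = w ⬝ᵥ x := rfl

theorem toExposed_simplex (w : ι → ℝ) (T : Finset ι) :
    (dotDual w).toExposed (simplex T) = simplex (argmax w T) := by
  have vertices : (dotDual w).toExposed ((fun i => Pi.single i 1) '' (T : Set ι)) =
      (fun i => Pi.single i 1) '' (argmax w T : Set ι) := by
    ext x
    constructor
    · rintro ⟨⟨i, hi, rfl⟩, hmax⟩
      refine ⟨i, mem_argmax.2 ⟨hi, fun j hj => ?_⟩, rfl⟩
      simpa [dotDual_apply] using hmax _ (Set.mem_image_of_mem _ hj)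
    · rintro ⟨i, hi, rfl⟩
      obtain ⟨hiT, hmax⟩ := mem_argmax.1 hi
      refine ⟨Set.mem_image_of_mem _ hiT, ?_⟩
      rintro _ ⟨j, hj, rfl⟩
      simpa [dotDual_apply] using hmax j hj
  rw [simplex, toExposed_convexHull, vertices, simplex]

theorem toExposed_simplexSum (w : ι → ℝ) (s : Finset κ) (A : κ → Finset ι) :
    (dotDual w).toExposed (simplexSum s A) = simplexSum s fun t => argmax w (A t) := by
  simp only [simplexSum, toExposed_finsetSum, toExposed_simplex]

theorem toExposed_simplexSum_nonempty {s : Finset κ} {A : κ → Finset ι}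
    (hA : ∀ t ∈ s, (A t).Nonempty) (w : ι → ℝ) :
    ((dotDual w).toExposed (simplexSum s A)).Nonempty := by
  rw [toExposed_simplexSum]
  exact nonempty_finsetSum fun t ht => simplex_nonempty (argmax_nonempty w (hA t ht))

theorem toExposed_simplexSum_subset_iff {s : Finset κ} {A : κ → Finset ι}
    (hA : ∀ t ∈ s, (A t).Nonempty) {w w' : ι → ℝ} :
    (dotDual w).toExposed (simplexSum s A) ⊆ (dotDual w').toExposed (simplexSum s A) ↔
      ∀ t ∈ s, argmax w (A t) ⊆ argmax w' (A t) := by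
  rw [simplexSum, toExposed_finsetSum_subset_iff]
  · simp only [toExposed_simplex, simplex_subset_simplex_iff]
  · intro t ht
    rw [toExposed_simplex]
    exact simplex_nonempty (argmax_nonempty w (hA t ht))

end SimplexSum

/-! ### Dimension -/

section VectorSpan

variable {k V κ : Type*} [Ring k] [AddCommGroup V] [Module k V]

theorem vectorSpan_add {A B : Set V} (hA : A.Nonempty) (hB : B.Nonempty) :
    vectorSpan k (A + B) = vectorSpan k A ⊔ vectorSpan k B := by
  obtain ⟨a, ha⟩ := hA
  obtain ⟨b, hb⟩ := hB
  simp only [vectorSpan_def]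
  apply le_antisymm
  · rw [Submodule.span_le]
    rintro _ ⟨_, ⟨x, hx, y, hy, rfl⟩, _, ⟨x', hx', y', hy', rfl⟩, rfl⟩
    simp only [vsub_eq_sub, add_sub_add_comm]
    exact Submodule.add_mem_sup (Submodule.subset_span (Set.vsub_mem_vsub hx hx'))
      (Submodule.subset_span (Set.vsub_mem_vsub hy hy'))
  · refine sup_le (Submodule.span_mono ?_) (Submodule.span_mono ?_)
    · rintro _ ⟨x, hx, y, hy, rfl⟩
      exact ⟨x + b, Set.add_mem_add hx hb, y + b, Set.add_mem_add hy hb, by simp⟩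
    · rintro _ ⟨x, hx, y, hy, rfl⟩
      exact ⟨a + x, Set.add_mem_add ha hx, a + y, Set.add_mem_add ha hy, by simp⟩

theorem vectorSpan_finsetSum {s : Finset κ} {K : κ → Set V} (hK : ∀ t ∈ s, (K t).Nonempty) :
    vectorSpan k (∑ t ∈ s, K t) = s.sup fun t => vectorSpan k (K t) := by
  classical
  induction s using Finset.induction_on with
  | empty => simp [← Set.singleton_zero]
  | insert t s ht ih =>
    rw [Finset.forall_mem_insert] at hK
    rw [Finset.sum_insert ht, vectorSpan_add hK.1 (nonempty_finsetSum hK.2), ih hK.2,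
      Finset.sup_insert]

end VectorSpan

section FiberSum

variable {k ι γ : Type*} [Ring k] [Fintype ι] [DecidableEq γ]

/-- The linear map `k^ι → k^γ` summing coordinates over the fibers of `π`. -/
noncomputable def fiberSum (k : Type*) [Ring k] (π : ι → γ) : (ι → k) →ₗ[k] (γ → k) :=
  Fintype.linearCombination k fun i => Pi.single (π i) 1

theorem fiberSum_single [DecidableEq ι] (π : ι → γ) (i : ι) :
    fiberSum k π (Pi.single i 1) = Pi.single (π i) 1 := by
  simp [fiberSum, Fintype.linearCombination_apply_single]

theorem fiberSum_comp_of_rightInverse [DecidableEq ι] [Fintype γ] {π : ι → γ} {σ : γ → ι}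
    (h : Function.RightInverse σ π) :
    fiberSum k π ∘ₗ fiberSum k σ = LinearMap.id :=
  LinearMap.pi_ext' fun c => LinearMap.ext_ring <| by simp [fiberSum_single, h c]

theorem finrank_ker_fiberSum_add_card {k : Type*} [DivisionRing k] [Fintype γ] {π : ι → γ}
    (hπ : Function.Surjective π) :
    Module.finrank k (LinearMap.ker (fiberSum k π)) + Fintype.card γ = Fintype.card ι := by
  classical
  obtain ⟨σ, hσ⟩ := hπ.hasRightInverse
  have range_eq_top : LinearMap.range (fiberSum k π) = ⊤ :=
    LinearMap.range_eq_top.2 (LinearMap.surjective_of_comp_eq_id _ _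
      (fiberSum_comp_of_rightInverse hσ))
  have rank_nullity := LinearMap.finrank_range_add_finrank_ker (fiberSum k π)
  rwa [range_eq_top, finrank_top, Module.finrank_fintype_fun_eq_card,
    Module.finrank_fintype_fun_eq_card, add_comm] at rank_nullity

theorem ker_fiberSum_le [DecidableEq ι] {π : ι → γ} (hπ : Function.Surjective π)
    {W : Submodule k (ι → k)}
    (hW : ∀ i j, π i = π j → (Pi.single i 1 - Pi.single j 1 : ι → k) ∈ W) :
    LinearMap.ker (fiberSum k π) ≤ W := by
  have := Fintype.ofSurjective π hπ
  obtain ⟨σ, hσ⟩ := hπ.hasRightInverse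
  -- Modulo `W` every `e_i` is `e_{σ (π i)}`, so `x` only depends on its sums over the fibers.
  have factor : W.mkQ = W.mkQ ∘ₗ fiberSum k σ ∘ₗ fiberSum k π :=
    LinearMap.pi_ext' fun i => LinearMap.ext_ring <| by
      simpa [fiberSum_single, Submodule.Quotient.eq] using hW i (σ (π i)) (hσ (π i)).symm
  intro x hx
  rw [← Submodule.ker_mkQ W, LinearMap.mem_ker, factor]
  simp [LinearMap.mem_ker.1 hx]

end FiberSum

theorem vectorSpan_simplex {ι : Type*} [DecidableEq ι] (T : Finset ι) :
    vectorSpan ℝ (simplex T) =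
      vectorSpan ℝ ((fun i => (Pi.single i 1 : ι → ℝ)) '' (T : Set ι)) := by
  rw [simplex, ← direction_affineSpan, affineSpan_convexHull, direction_affineSpan]

theorem vectorSpan_simplexSum {ι κ γ : Type*} [DecidableEq ι] [Fintype ι] [DecidableEq γ]
    {s : Finset κ} {A : κ → Finset ι} (hA : ∀ t ∈ s, (A t).Nonempty) {π : ι → γ}
    (hπ : Function.Surjective π) (hconst : ∀ t ∈ s, ∀ i ∈ A t, ∀ j ∈ A t, π i = π j)
    (hjoin : ∀ i j, π i = π j → ∃ t ∈ s, i ∈ A t ∧ j ∈ A t) :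
    vectorSpan ℝ (simplexSum s A) = LinearMap.ker (fiberSum ℝ π) := by
  rw [simplexSum, vectorSpan_finsetSum fun t ht => simplex_nonempty (hA t ht)]
  simp only [vectorSpan_simplex]
  apply le_antisymm
  · refine Finset.sup_le fun t ht => Submodule.span_le.2 ?_
    rintro _ ⟨_, ⟨i, hi, rfl⟩, _, ⟨j, hj, rfl⟩, rfl⟩
    simp [fiberSum_single, hconst t ht i hi j hj]
  · refine ker_fiberSum_le hπ fun i j hij => ?_
    obtain ⟨t, ht, hi, hj⟩ := hjoin i j hij
    refine Finset.le_sup (f := fun t => vectorSpan ℝ ((fun i => (Pi.single i 1 : ι → ℝ)) ''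
      (A t : Set ι))) ht ?_
    exact vsub_mem_vectorSpan ℝ (Set.mem_image_of_mem _ hi) (Set.mem_image_of_mem _ hj)

/-! ### Faces and combinatorial equivalence -/

section Faces

variable {d d₁ d₂ : ℕ}

theorem polyDim_eq_finrank_vectorSpan (P : Set (Fin d → ℝ)) :
    polyDim P = Module.finrank ℝ (vectorSpan ℝ P) := by
  rw [polyDim, direction_affineSpan]

theorem isFaceOf_toExposed {P : Set (Fin d → ℝ)} {w : Fin d → ℝ}
    (h : ((dotDual w).toExposed P).Nonempty) : IsFaceOf ((dotDual w).toExposed P) P :=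
  ⟨h, fun _ => ⟨dotDual w, rfl⟩⟩

theorem IsFaceOf.exists_eq_toExposed {F P : Set (Fin d → ℝ)} (hF : IsFaceOf F P) :
    ∃ w, F = (dotDual w).toExposed P := by
  obtain ⟨l, rfl⟩ := hF.2 hF.1
  obtain ⟨w, rfl⟩ := dotDual.surjective l
  exact ⟨w, rfl⟩

theorem IsFaceOf.eq_of_subset_of_polyDim_eq {F G P : Set (Fin d → ℝ)} (hF : IsFaceOf F P)
    (hFG : F ⊆ G) (hGP : G ⊆ P) (hdim : polyDim F = polyDim G) : F = G := by
  have span_le : affineSpan ℝ F ≤ affineSpan ℝ G := affineSpan_mono ℝ hFG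
  have span_eq : affineSpan ℝ F = affineSpan ℝ G :=
    AffineSubspace.eq_of_direction_eq_of_nonempty_of_le
      (Submodule.eq_of_le_of_finrank_eq (AffineSubspace.direction_le span_le) hdim)
      (hF.1.affineSpan ℝ) span_le
  refine hFG.antisymm ?_
  rw [← inter_affineSpan_eq_of_isExposed hF.2, span_eq]
  exact Set.subset_inter hGP (subset_affineSpan ℝ G)

/-- The map `φ` carries the normal fan of `P` to that of `Q`. -/
theorem combEquiv_of_toExposed_subset_iff {P : Set (Fin d₁ → ℝ)} {Q : Set (Fin d₂ → ℝ)}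
    (hP : ∀ w, ((dotDual w).toExposed P).Nonempty) (hQ : ∀ v, ((dotDual v).toExposed Q).Nonempty)
    (φ : (Fin d₁ → ℝ) → Fin d₂ → ℝ)
    (hφ : ∀ w w', (dotDual (φ w)).toExposed Q ⊆ (dotDual (φ w')).toExposed Q ↔
      (dotDual w).toExposed P ⊆ (dotDual w').toExposed P)
    (hφ_surj : ∀ v, ∃ w, (dotDual (φ w)).toExposed Q = (dotDual v).toExposed Q) :
    CombEquiv P Q := by
  choose weight hweight using fun F : {F // IsFaceOf F P} => F.2.exists_eq_toExposed
  let faceMap : {F // IsFaceOf F P} ↪o {G // IsFaceOf G Q} :=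
    OrderEmbedding.ofMapLEIff
      (fun F => ⟨(dotDual (φ (weight F))).toExposed Q, isFaceOf_toExposed (hQ _)⟩)
      fun F F' => by
        rw [Subtype.mk_le_mk, hφ, ← hweight, ← hweight, Subtype.coe_le_coe]
  have surjective : Function.Surjective faceMap := by
    rintro ⟨G, hG⟩
    obtain ⟨v, rfl⟩ := hG.exists_eq_toExposed
    obtain ⟨w, hw⟩ := hφ_surj v
    let F : {F // IsFaceOf F P} := ⟨(dotDual w).toExposed P, isFaceOf_toExposed (hP w)⟩
    refine ⟨F, Subtype.ext (Eq.trans ?_ hw)⟩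
    have same_face : (dotDual (weight F)).toExposed P = (dotDual w).toExposed P := (hweight F).symm
    exact ((hφ _ _).2 same_face.subset).antisymm ((hφ _ _).2 same_face.superset)
  exact ⟨RelIso.ofSurjective faceMap surjective⟩

theorem polyProd_eq_image (Q : Set (Fin d₁ → ℝ)) (R : Set (Fin d₂ → ℝ)) :
    polyProd Q R = Fin.appendEquiv d₁ d₂ '' (Q ×ˢ R) := by
  rw [Equiv.image_eq_preimage_symm]
  rfl

theorem polyProd_nonempty {Q : Set (Fin d₁ → ℝ)} {R : Set (Fin d₂ → ℝ)} (hQ : Q.Nonempty)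
    (hR : R.Nonempty) : (polyProd Q R).Nonempty := by
  rw [polyProd_eq_image]
  exact (hQ.prod hR).image _

theorem polyProd_subset_polyProd_iff {Q Q' : Set (Fin d₁ → ℝ)} {R R' : Set (Fin d₂ → ℝ)}
    (hQ : Q.Nonempty) (hR : R.Nonempty) :
    polyProd Q R ⊆ polyProd Q' R' ↔ Q ⊆ Q' ∧ R ⊆ R' := by
  rw [polyProd_eq_image, polyProd_eq_image, Set.image_subset_image_iff (Equiv.injective _),
    Set.prod_subset_prod_iff]
  simp [hQ.ne_empty, hR.ne_empty]

theorem dotDual_appendEquiv (v x : Fin d₁ → ℝ) (w y : Fin d₂ → ℝ) :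
    dotDual (Fin.appendEquiv d₁ d₂ (v, w)) (Fin.appendEquiv d₁ d₂ (x, y)) =
      dotDual v x + dotDual w y := by
  simp [dotDual_apply, dotProduct, Fin.appendEquiv, Fin.sum_univ_add]

theorem toExposed_polyProd (v : Fin d₁ → ℝ) (w : Fin d₂ → ℝ) (Q : Set (Fin d₁ → ℝ))
    (R : Set (Fin d₂ → ℝ)) :
    (dotDual (Fin.appendEquiv d₁ d₂ (v, w))).toExposed (polyProd Q R) =
      polyProd ((dotDual v).toExposed Q) ((dotDual w).toExposed R) := by
  rw [polyProd_eq_image, polyProd_eq_image]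
  ext z
  constructor
  · rintro ⟨⟨⟨x, y⟩, ⟨hx, hy⟩, rfl⟩, hmax⟩
    refine ⟨(x, y), ⟨⟨hx, fun x' hx' => ?_⟩, hy, fun y' hy' => ?_⟩, rfl⟩
    · simpa [dotDual_appendEquiv] using hmax _ (Set.mem_image_of_mem _ (Set.mk_mem_prod hx' hy))
    · simpa [dotDual_appendEquiv] using hmax _ (Set.mem_image_of_mem _ (Set.mk_mem_prod hx hy'))
  · rintro ⟨⟨x, y⟩, ⟨⟨hx, hxmax⟩, hy, hymax⟩, rfl⟩
    refine ⟨Set.mem_image_of_mem _ (Set.mk_mem_prod hx hy), ?_⟩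
    rintro _ ⟨⟨x', y'⟩, ⟨hx', hy'⟩, rfl⟩
    simpa only [dotDual_appendEquiv] using add_le_add (hxmax x' hx') (hymax y' hy')

section ProductOfSimplexSums

variable {κ₁ κ₂ : Type*} {s₁ : Finset κ₁} {s₂ : Finset κ₂} {A₁ : κ₁ → Finset (Fin d₁)}
  {A₂ : κ₂ → Finset (Fin d₂)}

theorem toExposed_polyProd_simplexSum_nonempty (hA₁ : ∀ t ∈ s₁, (A₁ t).Nonempty)
    (hA₂ : ∀ t ∈ s₂, (A₂ t).Nonempty) (v : Fin (d₁ + d₂) → ℝ) :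
    ((dotDual v).toExposed (polyProd (simplexSum s₁ A₁) (simplexSum s₂ A₂))).Nonempty := by
  obtain ⟨⟨v₁, v₂⟩, rfl⟩ := (Fin.appendEquiv d₁ d₂).surjective v
  rw [toExposed_polyProd]
  exact polyProd_nonempty (toExposed_simplexSum_nonempty hA₁ v₁)
    (toExposed_simplexSum_nonempty hA₂ v₂)

theorem toExposed_polyProd_simplexSum_subset_iff (hA₁ : ∀ t ∈ s₁, (A₁ t).Nonempty)
    (hA₂ : ∀ t ∈ s₂, (A₂ t).Nonempty) {v₁ v₁' : Fin d₁ → ℝ} {v₂ v₂' : Fin d₂ → ℝ} :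
    (dotDual (Fin.appendEquiv d₁ d₂ (v₁, v₂))).toExposed
        (polyProd (simplexSum s₁ A₁) (simplexSum s₂ A₂)) ⊆
      (dotDual (Fin.appendEquiv d₁ d₂ (v₁', v₂'))).toExposed
        (polyProd (simplexSum s₁ A₁) (simplexSum s₂ A₂)) ↔
    (∀ t ∈ s₁, argmax v₁ (A₁ t) ⊆ argmax v₁' (A₁ t)) ∧
      ∀ t ∈ s₂, argmax v₂ (A₂ t) ⊆ argmax v₂' (A₂ t) := by
  rw [toExposed_polyProd, toExposed_polyProd,
    polyProd_subset_polyProd_iff (toExposed_simplexSum_nonempty hA₁ v₁)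
      (toExposed_simplexSum_nonempty hA₂ v₂),
    toExposed_simplexSum_subset_iff hA₁, toExposed_simplexSum_subset_iff hA₂]

end ProductOfSimplexSums

theorem combEquiv_simplexSum_polyProd {m : ℕ} {κ : Type*} {s : Finset κ}
    {A : κ → Finset (Fin m)} (hA : ∀ t ∈ s, (A t).Nonempty) {S : Finset (Fin m)}
    {C₁ C₂ : Finset (Finset (Fin m))} (himage : s.image A = C₁ ∪ C₂) (hC₁ : ∀ T ∈ C₁, T ⊆ S)
    (hC₂ : ∀ T ∈ C₂, Disjoint T S) :
    CombEquiv (simplexSum s A) (polyProd (simplexSum C₁ id) (simplexSum C₂ id)) := by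
  have nonempty_mem : ∀ T ∈ C₁ ∪ C₂, T.Nonempty := by
    simpa only [← himage, Finset.forall_mem_image] using hA
  obtain ⟨hC₁_nonempty, hC₂_nonempty⟩ := Finset.forall_mem_union.1 nonempty_mem
  refine combEquiv_of_toExposed_subset_iff (toExposed_simplexSum_nonempty hA)
    (toExposed_polyProd_simplexSum_nonempty hC₁_nonempty hC₂_nonempty)
    (fun w => Fin.appendEquiv m m (w, w)) (fun w w' => ?_) fun v => ?_
  · rw [toExposed_polyProd_simplexSum_subset_iff (A₁ := id) (A₂ := id) hC₁_nonempty
      hC₂_nonempty, toExposed_simplexSum_subset_iff hA]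
    simp only [id_eq, ← Finset.forall_mem_union, ← himage, Finset.forall_mem_image]
  · obtain ⟨⟨v₁, v₂⟩, rfl⟩ := (Fin.appendEquiv m m).surjective v
    let w : Fin m → ℝ := fun i => if i ∈ S then v₁ i else v₂ i
    have argmax_w₁ : ∀ T ∈ C₁, argmax w T = argmax v₁ T := fun T hT =>
      argmax_congr fun i hi => if_pos (hC₁ T hT hi)
    have argmax_w₂ : ∀ T ∈ C₂, argmax w T = argmax v₂ T := fun T hT =>
      argmax_congr fun i hi => if_neg (Finset.disjoint_left.1 (hC₂ T hT) hi)
    refine ⟨w, Set.Subset.antisymm ?_ ?_⟩ <;>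
      rw [toExposed_polyProd_simplexSum_subset_iff (A₁ := id) (A₂ := id) hC₁_nonempty
        hC₂_nonempty]
    · exact ⟨fun T hT => (argmax_w₁ T hT).subset, fun T hT => (argmax_w₂ T hT).subset⟩
    · exact ⟨fun T hT => (argmax_w₁ T hT).superset, fun T hT => (argmax_w₂ T hT).superset⟩

end Faces

/-! ### Building sets -/

section NegIndicator

variable {ι : Type*} [DecidableEq ι]

/-- The weight `-1_S`, for which maximizing `dotDual (negIndicator S)` is minimizing
`∑ i ∈ S, x i`. -/
def negIndicator (S : Finset ι) : ι → ℝ :=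
  fun i => if i ∈ S then -1 else 0

theorem dotDual_negIndicator [Fintype ι] (S : Finset ι) (x : ι → ℝ) :
    dotDual (negIndicator S) x = -∑ i ∈ S, x i := by
  simp [dotDual_apply, dotProduct, negIndicator, Finset.sum_ite_mem]

theorem argmax_negIndicator_of_subset {S T : Finset ι} (hTS : T ⊆ S) :
    argmax (negIndicator S) T = T :=
  argmax_eq_self_iff.2 fun i hi j hj => by simp only [negIndicator, hTS hi, hTS hj, le_refl]

theorem argmax_negIndicator_of_not_subset {S T : Finset ι} (hTS : ¬ T ⊆ S) :
    argmax (negIndicator S) T = T \ S := by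
  obtain ⟨j, hjT, hjS⟩ := Finset.not_subset.1 hTS
  ext i
  rw [mem_argmax, Finset.mem_sdiff]
  refine and_congr_right fun _ => ⟨fun hmax hiS => ?_, fun hiS k _ => ?_⟩
  · have := hmax j hjT
    norm_num [negIndicator, hiS, hjS] at this
  · simp only [negIndicator, if_neg hiS]
    split_ifs <;> norm_num

end NegIndicator

section BuildingSet

variable {m : ℕ} {V S : Finset (Fin m)} {B : Finset (Finset (Fin m))}

theorem IsBuildingSetOn.restrictBS (hB : IsBuildingSetOn V B) (hS : S ∈ B) :
    IsBuildingSetOn S (restrictBS B S) where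
  subset_ground T hT := (Finset.mem_filter.1 hT).2
  nonempty_mem T hT := hB.nonempty_mem T (Finset.mem_filter.1 hT).1
  singleton_mem i hi := Finset.mem_filter.2
    ⟨hB.singleton_mem i (hB.subset_ground S hS hi), Finset.singleton_subset_iff.2 hi⟩
  ground_mem := Finset.mem_filter.2 ⟨hS, Finset.Subset.refl S⟩
  union_mem T₁ hT₁ T₂ hT₂ hinter := by
    obtain ⟨hT₁B, hT₁S⟩ := Finset.mem_filter.1 hT₁
    obtain ⟨hT₂B, hT₂S⟩ := Finset.mem_filter.1 hT₂
    exact Finset.mem_filter.2 ⟨hB.union_mem T₁ hT₁B T₂ hT₂B hinter, Finset.union_subset hT₁S hT₂S⟩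

theorem mem_contractBS {T : Finset (Fin m)} :
    T ∈ contractBS B S ↔ ∃ U ∈ B, ¬ U ⊆ S ∧ U \ S = T := by
  simp only [contractBS, Finset.mem_image, Finset.mem_filter, and_assoc]

theorem IsBuildingSetOn.contractBS (hB : IsBuildingSetOn V B) (hVS : ¬ V ⊆ S) :
    IsBuildingSetOn (V \ S) (contractBS B S) where
  subset_ground T hT := by
    obtain ⟨U, hU, -, rfl⟩ := mem_contractBS.1 hT
    exact Finset.sdiff_subset_sdiff (hB.subset_ground U hU) (Finset.Subset.refl S)
  nonempty_mem T hT := by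
    obtain ⟨U, -, hUS, rfl⟩ := mem_contractBS.1 hT
    exact Finset.sdiff_nonempty.2 hUS
  singleton_mem i hi := by
    obtain ⟨hiV, hiS⟩ := Finset.mem_sdiff.1 hi
    exact mem_contractBS.2 ⟨{i}, hB.singleton_mem i hiV, mt Finset.singleton_subset_iff.1 hiS,
      Finset.sdiff_eq_self_of_disjoint (Finset.disjoint_singleton_left.2 hiS)⟩
  ground_mem := mem_contractBS.2 ⟨V, hB.ground_mem, hVS, rfl⟩
  union_mem T₁ hT₁ T₂ hT₂ hinter := by
    obtain ⟨U₁, hU₁, hU₁S, rfl⟩ := mem_contractBS.1 hT₁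
    obtain ⟨U₂, hU₂, -, rfl⟩ := mem_contractBS.1 hT₂
    have hinter' : (U₁ ∩ U₂).Nonempty :=
      hinter.mono (Finset.inter_subset_inter Finset.sdiff_subset Finset.sdiff_subset)
    exact mem_contractBS.2 ⟨U₁ ∪ U₂, hB.union_mem U₁ hU₁ U₂ hU₂ hinter',
      fun h => hU₁S (Finset.subset_union_left.trans h), Finset.union_sdiff_distrib U₁ U₂ S⟩

theorem nestohedron_eq_simplexSum (B : Finset (Finset (Fin m))) :
    nestohedron m B = simplexSum B id :=
  rfl

theorem minFace_eq_toExposed (B : Finset (Finset (Fin m))) (S : Finset (Fin m)) :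
    minFace m B S = (dotDual (negIndicator S)).toExposed (simplexSum B id) := by
  ext x
  simp only [minFace, ContinuousLinearMap.toExposed, dotDual_negIndicator, neg_le_neg_iff,
    nestohedron_eq_simplexSum]

theorem image_argmax_negIndicator (B : Finset (Finset (Fin m))) (S : Finset (Fin m)) :
    B.image (argmax (negIndicator S)) = restrictBS B S ∪ contractBS B S := by
  conv_lhs => rw [← Finset.filter_union_filter_not_eq (· ⊆ S) B, Finset.image_union]
  congr 1
  · rw [restrictBS]
    conv_rhs => rw [← Finset.image_id (s := B.filter (· ⊆ S))]
    exact Finset.image_congr fun T hT =>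
      argmax_negIndicator_of_subset (Finset.mem_filter.1 hT).2
  · exact Finset.image_congr fun T hT =>
      argmax_negIndicator_of_not_subset (Finset.mem_filter.1 hT).2

theorem IsBuildingSetOn.exists_argmax_subset_argmax_negIndicator {α : Type*} [LinearOrder α]
    {w : Fin m → α} (hB : IsBuildingSetOn V B) (hw : argmax w V ≠ V) :
    ∃ S ∈ B, S ≠ V ∧ ∀ T ∈ B, argmax w T ⊆ argmax (negIndicator S) T := by
  obtain ⟨i, hiV, hi⟩ := Finset.exists_of_ssubset ((argmax_subset w V).ssubset_of_ne hw)
  have singleton_candidate : {i} ∈ {S ∈ B | Disjoint S (argmax w V)} :=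
    Finset.mem_filter.2 ⟨hB.singleton_mem i hiV, Finset.disjoint_singleton_left.2 hi⟩
  obtain ⟨S, hS, maximal⟩ := Finset.exists_maximal ⟨{i}, singleton_candidate⟩
  obtain ⟨hSB, hSw⟩ := Finset.mem_filter.1 hS
  refine ⟨S, hSB, ?_, fun T hT => ?_⟩
  · rintro rfl
    obtain ⟨j, hj⟩ := argmax_nonempty w (hB.nonempty_mem S hSB)
    exact Finset.disjoint_left.1 hSw (mem_argmax.1 hj).1 hj
  by_cases hTS : T ⊆ S
  · rw [argmax_negIndicator_of_subset hTS]
    exact argmax_subset w T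
  rw [argmax_negIndicator_of_not_subset hTS, Finset.subset_sdiff]
  refine ⟨argmax_subset w T, ?_⟩
  by_cases hTw : Disjoint T (argmax w V)
  · have disjoint_TS : Disjoint T S := by
      by_contra hTS_meet
      have hTS_inter := Finset.not_disjoint_iff_nonempty_inter.1 hTS_meet
      have union_candidate : T ∪ S ∈ {S ∈ B | Disjoint S (argmax w V)} :=
        Finset.mem_filter.2 ⟨hB.union_mem T hT S hSB hTS_inter, Finset.disjoint_union_left.2
          ⟨hTw, hSw⟩⟩
      exact hTS (Finset.subset_union_left.trans
        (maximal union_candidate Finset.subset_union_right))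
    exact disjoint_TS.mono_left (argmax_subset w T)
  · obtain ⟨j, hjT, hj⟩ := Finset.not_disjoint_iff.1 hTw
    exact hSw.symm.mono_left (argmax_subset_argmax_of_mem (hB.subset_ground T hT) hjT hj)

end BuildingSet

/-! ### Facets of nestohedra -/

section Facets

variable {m : ℕ} {S S₁ S₂ : Finset (Fin m)} {B : Finset (Finset (Fin m))}

theorem polyDim_simplexSum_add_card {κ γ : Type*} [Fintype γ] {s : Finset κ}
    {A : κ → Finset (Fin m)} (hA : ∀ t ∈ s, (A t).Nonempty) {π : Fin m → γ}
    (hπ : Function.Surjective π) (hconst : ∀ t ∈ s, ∀ i ∈ A t, ∀ j ∈ A t, π i = π j)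
    (hjoin : ∀ i j, π i = π j → ∃ t ∈ s, i ∈ A t ∧ j ∈ A t) :
    polyDim (simplexSum s A) + Fintype.card γ = m := by
  classical
  rw [polyDim_eq_finrank_vectorSpan, vectorSpan_simplexSum hA hπ hconst hjoin,
    finrank_ker_fiberSum_add_card hπ, Fintype.card_fin]

theorem IsConnectedBuildingSet.polyDim_nestohedron_add_one (hB : IsConnectedBuildingSet m B) :
    polyDim (nestohedron m B) + 1 = m := by
  obtain ⟨i, -⟩ := hB.nonempty_mem _ hB.ground_mem
  exact polyDim_simplexSum_add_card (A := id) (π := fun _ => ()) hB.nonempty_mem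
    (fun _ => ⟨i, rfl⟩) (fun _ _ _ _ _ _ => rfl)
    fun j k _ => ⟨_, hB.ground_mem, Finset.mem_univ j, Finset.mem_univ k⟩

theorem IsConnectedBuildingSet.polyDim_minFace_add_two (hB : IsConnectedBuildingSet m B)
    (hS : S ∈ B) (hSne : S ≠ Finset.univ) : polyDim (minFace m B S) + 2 = m := by
  rw [minFace_eq_toExposed, toExposed_simplexSum]
  refine polyDim_simplexSum_add_card (π := fun i => decide (i ∈ S))
    (fun T hT => argmax_nonempty _ (hB.nonempty_mem T hT)) ?_ (fun T _ => ?_) fun i j hij => ?_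
  · rintro (_ | _)
    · obtain ⟨i, -, hi⟩ := Finset.not_subset.1 (mt Finset.univ_subset_iff.1 hSne)
      exact ⟨i, decide_eq_false hi⟩
    · obtain ⟨i, hi⟩ := hB.nonempty_mem S hS
      exact ⟨i, decide_eq_true hi⟩
  · by_cases hTS : T ⊆ S
    · simp +contextual [argmax_negIndicator_of_subset hTS, hTS _]
    · simp +contextual [argmax_negIndicator_of_not_subset hTS]
  · rw [decide_eq_decide] at hij
    by_cases hi : i ∈ S
    · refine ⟨S, hS, ?_⟩
      rw [argmax_negIndicator_of_subset (Finset.Subset.refl S)]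
      exact ⟨hi, hij.1 hi⟩
    · refine ⟨Finset.univ, hB.ground_mem, ?_⟩
      simpa only [id_eq, argmax_negIndicator_of_not_subset (mt Finset.univ_subset_iff.1 hSne),
        Finset.mem_sdiff, Finset.mem_univ, true_and] using ⟨hi, mt hij.2 hi⟩

theorem IsConnectedBuildingSet.isFacetOf_minFace (hB : IsConnectedBuildingSet m B)
    (hS : S ∈ B) (hSne : S ≠ Finset.univ) : IsFacetOf (minFace m B S) (nestohedron m B) := by
  constructor
  · rw [minFace_eq_toExposed]
    exact isFaceOf_toExposed (toExposed_simplexSum_nonempty hB.nonempty_mem _)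
  · have := hB.polyDim_minFace_add_two hS hSne
    have := hB.polyDim_nestohedron_add_one
    lia

theorem combEquiv_minFace (hB : ∀ T ∈ B, T.Nonempty) (S : Finset (Fin m)) :
    CombEquiv (minFace m B S)
      (polyProd (nestohedron m (restrictBS B S)) (nestohedron m (contractBS B S))) := by
  rw [minFace_eq_toExposed, toExposed_simplexSum]
  refine combEquiv_simplexSum_polyProd (S := S) (fun T hT => argmax_nonempty _ (hB T hT))
    (image_argmax_negIndicator B S) (fun T hT => (Finset.mem_filter.1 hT).2) fun T hT => ?_
  obtain ⟨U, -, -, rfl⟩ := mem_contractBS.1 hT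
  exact Finset.sdiff_disjoint

theorem IsConnectedBuildingSet.subset_of_minFace_subset (hB : IsConnectedBuildingSet m B)
    (hS₁ : S₁ ≠ Finset.univ) (hS₂ : S₂ ≠ Finset.univ) (h : minFace m B S₁ ⊆ minFace m B S₂) :
    S₂ ⊆ S₁ := by
  rw [minFace_eq_toExposed, minFace_eq_toExposed] at h
  have argmax_univ : argmax (negIndicator S₁) Finset.univ ⊆ argmax (negIndicator S₂) Finset.univ :=
    (toExposed_simplexSum_subset_iff (A := id) hB.nonempty_mem).1 h _ hB.ground_mem
  rwa [argmax_negIndicator_of_not_subset (mt Finset.univ_subset_iff.1 hS₁),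
    argmax_negIndicator_of_not_subset (mt Finset.univ_subset_iff.1 hS₂),
    ← Finset.compl_eq_univ_sdiff, ← Finset.compl_eq_univ_sdiff,
    Finset.compl_subset_compl] at argmax_univ

theorem IsConnectedBuildingSet.exists_minFace_eq (hB : IsConnectedBuildingSet m B)
    {F : Set (Fin m → ℝ)} (hF : IsFacetOf F (nestohedron m B)) :
    ∃ S ∈ B, S ≠ Finset.univ ∧ minFace m B S = F := by
  obtain ⟨hFace, hFdim⟩ := hF
  obtain ⟨w, rfl⟩ := hFace.exists_eq_toExposed
  have argmax_ne : argmax w Finset.univ ≠ Finset.univ := by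
    intro argmax_eq
    have face_eq : (dotDual w).toExposed (nestohedron m B) = nestohedron m B := by
      rw [nestohedron_eq_simplexSum, toExposed_simplexSum]
      exact Finset.sum_congr rfl fun T _ =>
        congrArg simplex (argmax_eq_self_of_subset (Finset.subset_univ T) argmax_eq)
    rw [face_eq] at hFdim
    lia
  obtain ⟨S, hS, hSne, hsubset⟩ :=
    IsBuildingSetOn.exists_argmax_subset_argmax_negIndicator hB argmax_ne
  have face_subset : (dotDual w).toExposed (nestohedron m B) ⊆ minFace m B S := by
    rw [minFace_eq_toExposed]
    exact (toExposed_simplexSum_subset_iff hB.nonempty_mem).2 hsubset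
  have hSfacet := hB.isFacetOf_minFace hS hSne
  exact ⟨S, hS, hSne, (hFace.eq_of_subset_of_polyDim_eq face_subset hSfacet.1.2.subset
    (Nat.add_right_cancel (hFdim.trans hSfacet.2.symm))).symm⟩

end Facets

/-- for `S ∈ B`, `S ≠ [m]`, the minimizing set of `x ↦ ∑_{i ∈ S} x i`
on the nestohedron `P_B` is a facet, combinatorially equivalent to
`P_{B|_S} × P_{B/S}`, and `S ↦ (this facet)` is a bijection from `B \ {[m]}` to the
set of facets of `P_B`. -/
theorem nestohedron_facets (m : ℕ) (hm : 2 ≤ m) (B : Finset (Finset (Fin m)))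
    (hB : IsConnectedBuildingSet m B) (S : Finset (Fin m)) (hS : S ∈ B)
    (hSne : S ≠ Finset.univ) :
    IsFacetOf (minFace m B S) (nestohedron m B) ∧
    IsBuildingSetOn S (restrictBS B S) ∧
    IsBuildingSetOn (Finset.univ \ S) (contractBS B S) ∧
    CombEquiv (minFace m B S)
      (polyProd (nestohedron m (restrictBS B S)) (nestohedron m (contractBS B S))) ∧
    (∀ S₁ ∈ B, S₁ ≠ Finset.univ → ∀ S₂ ∈ B, S₂ ≠ Finset.univ →
      minFace m B S₁ = minFace m B S₂ → S₁ = S₂) ∧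
    (∀ F, IsFacetOf F (nestohedron m B) →
      ∃ S' ∈ B, S' ≠ Finset.univ ∧ minFace m B S' = F) := by
  refine ⟨hB.isFacetOf_minFace hS hSne, hB.restrictBS hS,
    hB.contractBS (mt Finset.univ_subset_iff.1 hSne), combEquiv_minFace hB.nonempty_mem S,
    fun S₁ _ hne₁ S₂ _ hne₂ heq => ?_, fun F hF => hB.exists_minFace_eq hF⟩
  exact (hB.subset_of_minFace_subset hne₂ hne₁ heq.superset).antisymm
    (hB.subset_of_minFace_subset hne₁ hne₂ heq.subset)

end GalD
end
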